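/- arXiv:1303.4040 — 3 statements merged into one kernel-verified Lean document; each statement's English description precedes it below -/
import Mathlib

section
/- Let h(t) = e^{-t²} for t > 0. Then for every natural number N there exist complex linear subspaces L₊, L₋ ⊆ C_c^∞((0,∞)), each of dimension N, such that Q_h[f] > 0 for every nonzero f ∈ L₊ and Q_h[f] < 0 for every nonzero f ∈ L₋. Consequently the Hankel operator with the Gaussian kernel e^{-t²} has infinitely many positive and infinitely many negative eigenvalues. -/
open MeasureTheory
open scoped ComplexOrder

noncomputable section

/-- Complex-valued test functions: smooth, compactly supported, support inside `(0,∞)`. -/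
def IsTestFun (f : ℝ → ℂ) : Prop :=
  ContDiff ℝ (⊤ : ℕ∞) f ∧ HasCompactSupport f ∧ tsupport f ⊆ Set.Ioi 0

/-- The Hankel quadratic form `Q_h[f] = ∫₀^∞∫₀^∞ h(t+s) f(s) conj(f(t)) ds dt`. -/
def hankelQF (h : ℝ → ℂ) (f : ℝ → ℂ) : ℂ :=
  ∫ t in Set.Ioi (0:ℝ), ∫ s in Set.Ioi (0:ℝ), h (t + s) * f s * (starRingEnd ℂ) (f t)

/-- The polynomial multiples of a bump function on `(0,1)` realise every finite moment sequence. -/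
theorem exists_contDiff_moments_eq (m : ℕ) (b : Fin (m + 1) → ℝ) :
    ∃ g : ℝ → ℝ, ContDiff ℝ (⊤ : ℕ∞) g ∧ HasCompactSupport g ∧ tsupport g ⊆ Set.Ioo 0 1 ∧
      ∀ i : Fin (m + 1), ∫ t, t ^ (i : ℕ) * g t = b i := by
  obtain ⟨φ, hφs, hφc, hφd, hφr, hφ1⟩ := exists_contDiff_tsupport_subset (n := ⊤)
    (Ioo_mem_nhds (show (0 : ℝ) < 1 / 2 by norm_num) (show (1 / 2 : ℝ) < 1 by norm_num))
  have hφ0 : ∀ t, 0 ≤ φ t := fun t => (hφr ⟨t, rfl⟩).1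
  have hint : ∀ q : ℝ → ℝ, Continuous q → Integrable (fun t => q t * φ t) := fun q hq =>
    (hq.mul hφd.continuous).integrable_of_hasCompactSupport hφc.mul_left
  set H : Matrix (Fin (m + 1)) (Fin (m + 1)) ℝ :=
    Matrix.of fun i j => ∫ t, t ^ ((i : ℕ) + j) * φ t with hH
  have hmul : ∀ (c : Fin (m + 1) → ℝ) (i : Fin (m + 1)),
      ∫ t, t ^ (i : ℕ) * ((∑ j, c j * t ^ (j : ℕ)) * φ t) = H.mulVec c i := by
    intro c i
    have : ∀ t, t ^ (i : ℕ) * ((∑ j, c j * t ^ (j : ℕ)) * φ t)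
        = ∑ j, c j * (t ^ ((i : ℕ) + j) * φ t) := by
      intro t
      rw [Finset.sum_mul, Finset.mul_sum]
      exact Finset.sum_congr rfl fun j _ => by ring
    simp_rw [this]
    rw [integral_finsetSum _ fun j _ => (hint _ (by fun_prop)).const_mul _]
    simp [Matrix.mulVec, dotProduct, hH, integral_const_mul, mul_comm]
  have hinj : Function.Injective (Matrix.mulVecLin H) := by
    rw [← LinearMap.ker_eq_bot, LinearMap.ker_eq_bot']
    intro c hc
    by_contra hne
    set p : Polynomial ℝ := ∑ j : Fin (m + 1), Polynomial.monomial (j : ℕ) (c j) with hp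
    have hev : ∀ t, p.eval t = ∑ j, c j * t ^ (j : ℕ) := fun t => by
      simp [hp, Polynomial.eval_finsetSum]
    have hp0 : p ≠ 0 := by
      intro h0
      apply hne
      ext k
      have := congrArg (fun q : Polynomial ℝ => q.coeff k) h0
      simpa [hp, Polynomial.finsetSum_coeff, Polynomial.coeff_monomial, Fin.val_inj] using this
    have hφev : ∀ᶠ t in nhds (1 / 2 : ℝ), φ t ≠ 0 :=
      hφd.continuous.continuousAt.eventually_ne (by rw [hφ1]; exact one_ne_zero)
    obtain ⟨t, hφt, hpt⟩ : ∃ t, φ t ≠ 0 ∧ p.eval t ≠ 0 := by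
      by_contra! hcon
      exact hp0 (p.eq_zero_of_infinite_isRoot
        ((infinite_of_mem_nhds _ hφev).mono fun t ht => hcon t ht))
    have hzero : ∫ t, p.eval t * (p.eval t * φ t) = 0 := by
      have : ∀ t, p.eval t * (p.eval t * φ t)
          = ∑ i, c i * (t ^ (i : ℕ) * ((∑ j, c j * t ^ (j : ℕ)) * φ t)) := by
        intro t
        rw [hev, Finset.sum_mul]
        exact Finset.sum_congr rfl fun j _ => by ring
      simp_rw [this]
      rw [integral_finsetSum _ fun j _ => Integrable.const_mul (by
        simp_rw [← mul_assoc]; exact hint _ (by fun_prop)) _]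
      refine Finset.sum_eq_zero fun i _ => ?_
      rw [integral_const_mul, hmul]
      have := congrFun hc i
      simp only [Matrix.mulVecLin_apply, Pi.zero_apply] at this
      rw [this, mul_zero]
    have hpos := Continuous.integral_pos_of_hasCompactSupport_nonneg_nonzero
      (μ := volume) (f := fun t => p.eval t * (p.eval t * φ t)) (x := t)
      (p.continuous.mul (p.continuous.mul hφd.continuous)) hφc.mul_left.mul_left
      (fun t => by
        show 0 ≤ p.eval t * (p.eval t * φ t)
        rw [← mul_assoc]; exact mul_nonneg (mul_self_nonneg _) (hφ0 t))
      (mul_ne_zero hpt (mul_ne_zero hpt hφt))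
    exact hpos.ne' hzero
  obtain ⟨c, hc⟩ := LinearMap.injective_iff_surjective.1 hinj b
  refine ⟨fun t => (∑ j, c j * t ^ (j : ℕ)) * φ t, ContDiff.mul (by fun_prop) hφd,
    hφc.mul_left, (tsupport_mul_subset_right).trans hφs, fun i => ?_⟩
  rw [hmul, ← hc, Matrix.mulVecLin_apply]

/-- Functions concentrated near the origin, dual to the first moments, with controlled `L¹` norm. -/
theorem exists_contDiff_dual_moments_scaled (m : ℕ) (j : Fin (m + 1)) :
    ∃ C : ℝ, ∀ ε : ℝ, 0 < ε → ε ≤ 1 → ∃ g : ℝ → ℝ,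
      ContDiff ℝ (⊤ : ℕ∞) g ∧ HasCompactSupport g ∧ tsupport g ⊆ Set.Ioo 0 ε ∧
      (∀ i : ℕ, i ≤ m → ∫ t, t ^ i * g t = if i = j then 1 else 0) ∧
      ε ^ m * ∫ t, |g t| ≤ C := by
  obtain ⟨g, hgd, hgc, hgs, hgm⟩ := exists_contDiff_moments_eq m (Pi.single j 1)
  refine ⟨∫ t, |g t|, fun ε hε hε1 => ?_⟩
  have hI : 0 ≤ ∫ t, |g t| := integral_nonneg fun t => abs_nonneg _
  refine ⟨fun t => (ε ^ ((j : ℕ) + 1))⁻¹ * g (ε⁻¹ * t), ?_, ?_, ?_, ?_, ?_⟩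
  · exact contDiff_const.mul (hgd.comp (contDiff_const.mul contDiff_id))
  · exact (hgc.comp_smul (inv_ne_zero hε.ne')).mul_left
  · refine tsupport_mul_subset_right.trans fun t ht => ?_
    have h1 : ε⁻¹ * t ∈ tsupport g :=
      tsupport_comp_subset_preimage g (f := fun t => ε⁻¹ * t) (by fun_prop) ht
    obtain ⟨h2, h3⟩ := hgs h1
    rw [inv_mul_eq_div] at h2 h3
    exact ⟨by simpa [hε] using (div_pos_iff_of_pos_right hε).1 h2, (div_lt_one hε).1 h3⟩
  · intro i hi
    have : ∀ t, t ^ i * ((ε ^ ((j : ℕ) + 1))⁻¹ * g (ε⁻¹ * t))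
        = (ε ^ i * (ε ^ ((j : ℕ) + 1))⁻¹) * ((ε⁻¹ * t) ^ i * g (ε⁻¹ * t)) := by
      intro t
      rw [mul_pow, inv_pow]
      field_simp
    simp_rw [this]
    rw [integral_const_mul, Measure.integral_comp_mul_left (fun t => t ^ i * g t),
      hgm ⟨i, Nat.lt_succ_of_le hi⟩, inv_inv, abs_of_pos hε, smul_eq_mul, Pi.single_apply]
    by_cases hij : i = j
    · subst hij
      simp only [if_true]
      field_simp
      ring
    · rw [if_neg hij, if_neg (fun h => hij (congrArg Fin.val h))]
      simp
  · have : ∀ t, |(ε ^ ((j : ℕ) + 1))⁻¹ * g (ε⁻¹ * t)| = (ε ^ ((j : ℕ) + 1))⁻¹ * |g (ε⁻¹ * t)| := by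
      intro t
      rw [abs_mul, abs_of_pos (by positivity)]
    simp_rw [this]
    rw [integral_const_mul, Measure.integral_comp_mul_left (fun t => |g t|), inv_inv,
      abs_of_pos hε, smul_eq_mul]
    have h1 : ε ^ m ≤ ε ^ (j : ℕ) := pow_le_pow_of_le_one hε.le hε1 (Nat.le_of_lt_succ j.2)
    calc ε ^ m * ((ε ^ ((j : ℕ) + 1))⁻¹ * (ε * ∫ t, |g t|))
        = ε ^ m / ε ^ (j : ℕ) * ∫ t, |g t| := by
          field_simp
          ring
      _ ≤ 1 * ∫ t, |g t| := by
          gcongr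
          exact (div_le_one (by positivity)).2 h1
      _ = _ := one_mul _

/-- The Laplace-type quadratic form `∬ e^{-2ts} g(s) conj(g(t)) ds dt`. -/
def laplaceQF (g : ℝ → ℂ) : ℂ :=
  ∫ z : ℝ × ℝ, (Real.exp (-2 * z.1 * z.2) : ℂ) * ((starRingEnd ℂ) (g z.1) * g z.2)

theorem integrable_mul_conj_mul {g : ℝ → ℂ} (hg : Continuous g) (hc : HasCompactSupport g)
    {k : ℝ × ℝ → ℂ} (hk : Continuous k) :
    Integrable fun z : ℝ × ℝ => k z * ((starRingEnd ℂ) (g z.1) * g z.2) := by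
  refine Continuous.integrable_of_hasCompactSupport (by fun_prop) (HasCompactSupport.mul_left ?_)
  refine HasCompactSupport.intro (hc.isCompact.prod hc.isCompact) fun z hz => ?_
  rw [Set.mem_prod, not_and_or] at hz
  rcases hz with hz | hz <;> simp [image_eq_zero_of_notMem_tsupport hz]

theorem hankelQF_gaussian_eq_laplaceQF {g : ℝ → ℂ} (hg : Continuous g) (hc : HasCompactSupport g)
    (hs : tsupport g ⊆ Set.Ioi 0) :
    hankelQF (fun t : ℝ => ((Real.exp (-t ^ 2) : ℝ) : ℂ))
      (fun t => (Real.exp (t ^ 2) : ℂ) * g t) = laplaceQF g := by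
  have hz : ∀ t, t ∉ Set.Ioi (0 : ℝ) → g t = 0 := fun t ht =>
    image_eq_zero_of_notMem_tsupport fun h => ht (hs h)
  have hint := integrable_mul_conj_mul hg hc
    (k := fun z : ℝ × ℝ => (Real.exp (-2 * z.1 * z.2) : ℂ)) (by fun_prop)
  rw [laplaceQF, Measure.volume_eq_prod, integral_prod _ hint, hankelQF,
    setIntegral_eq_integral_of_forall_compl_eq_zero fun t ht => by simp [hz t ht]]
  congr 1 with t
  rw [setIntegral_eq_integral_of_forall_compl_eq_zero fun s hs => by simp [hz s hs]]
  congr 1 with s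
  have : Real.exp (-2 * t * s) = Real.exp (-(t + s) ^ 2) * Real.exp (s ^ 2) * Real.exp (t ^ 2) := by
    rw [← Real.exp_add, ← Real.exp_add]
    ring_nf
  simp only [this, map_mul, Complex.conj_ofReal, Complex.ofReal_mul]
  ring

theorem conj_laplaceQF (g : ℝ → ℂ) : (starRingEnd ℂ) (laplaceQF g) = laplaceQF g := by
  rw [laplaceQF, ← integral_conj, Measure.volume_eq_prod, ← integral_prod_swap]
  congr 1 with z
  simp only [Prod.fst_swap, Prod.snd_swap, map_mul, Complex.conj_ofReal, Complex.conj_conj]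
  rw [mul_comm (g z.2), mul_right_comm (-2) z.2]

/-- Truncating the exponential series expresses the form through moments, up to a small error. -/
theorem norm_laplaceQF_sub_moments_le {g : ℝ → ℂ} (hg : Continuous g) (hc : HasCompactSupport g)
    {ε : ℝ} (hε : ε ≤ 1 / 2) (hs : tsupport g ⊆ Set.Ioo 0 ε) {n : ℕ} (hn : 0 < n) :
    ‖laplaceQF g - ((∑ i ∈ Finset.range n,
        (-2) ^ i / (i.factorial : ℝ) * ‖∫ t : ℝ, (t : ℂ) ^ i * g t‖ ^ 2 : ℝ) : ℂ)‖
      ≤ (2 * ε ^ 2) ^ n * (n.succ / (n.factorial * n)) * (∫ t, ‖g t‖) ^ 2 := by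
  set P : ℝ × ℝ → ℝ := fun z => ∑ i ∈ Finset.range n, (-2 * z.1 * z.2) ^ i / (i.factorial : ℝ)
    with hP
  have hmom : ∫ z : ℝ × ℝ, (P z : ℂ) * ((starRingEnd ℂ) (g z.1) * g z.2)
      = ((∑ i ∈ Finset.range n,
        (-2) ^ i / (i.factorial : ℝ) * ‖∫ t : ℝ, (t : ℂ) ^ i * g t‖ ^ 2 : ℝ) : ℂ) := by
    have hexp : ∀ z : ℝ × ℝ, (P z : ℂ) * ((starRingEnd ℂ) (g z.1) * g z.2)
        = ∑ i ∈ Finset.range n, (((-2) ^ i / (i.factorial : ℝ) : ℝ) : ℂ) *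
          ((starRingEnd ℂ) ((z.1 : ℂ) ^ i * g z.1) * ((z.2 : ℂ) ^ i * g z.2)) := by
      intro z
      simp only [hP, Complex.ofReal_sum, Finset.sum_mul]
      refine Finset.sum_congr rfl fun i _ => ?_
      simp only [map_mul, map_pow, Complex.conj_ofReal, mul_pow]
      push_cast
      ring
    have hgi : ∀ i : ℕ, Integrable fun t : ℝ => (t : ℂ) ^ i * g t := fun i =>
      Continuous.integrable_of_hasCompactSupport (by fun_prop) hc.mul_left
    have hgi' : ∀ i : ℕ, Integrable fun t : ℝ => (starRingEnd ℂ) ((t : ℂ) ^ i * g t) := fun i =>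
      Continuous.integrable_of_hasCompactSupport (by fun_prop)
        ((hc.mul_left (f := fun t : ℝ => (t : ℂ) ^ i)).comp_left (map_zero (starRingEnd ℂ)))
    simp_rw [hexp]
    rw [Measure.volume_eq_prod, integral_finsetSum _ fun i _ =>
      ((hgi' i).mul_prod (hgi i)).const_mul _, Complex.ofReal_sum]
    refine Finset.sum_congr rfl fun i _ => ?_
    rw [integral_const_mul, integral_prod_mul (fun t : ℝ => (starRingEnd ℂ) ((t : ℂ) ^ i * g t))
      (fun t : ℝ => (t : ℂ) ^ i * g t), integral_conj, Complex.conj_mul', Complex.ofReal_mul,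
      Complex.ofReal_pow]
  rw [← hmom, laplaceQF, ← integral_sub (integrable_mul_conj_mul hg hc (by fun_prop))
    (integrable_mul_conj_mul hg hc (by fun_prop))]
  have hgn : Integrable fun t => ‖g t‖ := (hg.integrable_of_hasCompactSupport hc).norm
  calc _ ≤ ∫ z : ℝ × ℝ, (2 * ε ^ 2) ^ n * (n.succ / (n.factorial * n)) * (‖g z.1‖ * ‖g z.2‖) := by
        refine norm_integral_le_of_norm_le ((hgn.mul_prod hgn).const_mul _)
          (Filter.Eventually.of_forall fun z => ?_)
        rw [← sub_mul, norm_mul, norm_mul, RCLike.norm_conj, ← Complex.ofReal_sub,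
          Complex.norm_real, Real.norm_eq_abs]
        by_cases h1 : z.1 ∈ tsupport g
        swap
        · simp [image_eq_zero_of_notMem_tsupport h1]
        by_cases h2 : z.2 ∈ tsupport g
        swap
        · simp [image_eq_zero_of_notMem_tsupport h2]
        obtain ⟨h1p, h1e⟩ := hs h1
        obtain ⟨h2p, h2e⟩ := hs h2
        have habs : |-2 * z.1 * z.2| ≤ 2 * ε ^ 2 := by
          rw [abs_mul, abs_mul, abs_of_pos h1p, abs_of_pos h2p, abs_neg, abs_two]
          nlinarith
        have hle : |-2 * z.1 * z.2| ≤ 1 := habs.trans (by nlinarith)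
        refine mul_le_mul_of_nonneg_right ((Real.exp_bound hle hn).trans ?_) (by positivity)
        gcongr
    _ = _ := by
        rw [integral_const_mul, Measure.volume_eq_prod,
          integral_prod_mul (fun t => ‖g t‖) (fun t => ‖g t‖), sq (∫ t, ‖g t‖)]

/-- The space of smooth compactly supported functions with topological support inside `U`. -/
def testFunctionsOn (U : Set ℝ) : Submodule ℂ (ℝ → ℂ) where
  carrier := {f | ContDiff ℝ (⊤ : ℕ∞) f ∧ HasCompactSupport f ∧ tsupport f ⊆ U}
  zero_mem' := ⟨contDiff_const, HasCompactSupport.zero, by simp [tsupport]⟩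
  add_mem' := fun hf hg => ⟨hf.1.add hg.1, hf.2.1.add hg.2.1,
    (tsupport_add _ _).trans (Set.union_subset hf.2.2 hg.2.2)⟩
  smul_mem' := fun c f hf => ⟨contDiff_const.smul hf.1, hf.2.1.smul_left (f := fun _ => c),
    (tsupport_smul_subset_right (fun _ => c) f).trans hf.2.2⟩

theorem exists_pos_le_half_sq_mul_lt {D a : ℝ} (hD : 0 ≤ D) (ha : 0 < a) :
    ∃ ε : ℝ, 0 < ε ∧ ε ≤ 1 / 2 ∧ ε ^ 2 * D < a := by
  refine ⟨min (1 / 2) (a / (D + 1)), by positivity, min_le_left _ _, ?_⟩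
  set ε := min (1 / 2) (a / (D + 1)) with hε
  have h0 : 0 < ε := by positivity
  have h1 : ε ≤ 1 / 2 := min_le_left _ _
  have h2 : ε * (D + 1) ≤ a := (le_div_iff₀ (by positivity)).1 (min_le_right _ _)
  nlinarith [mul_nonneg h0.le hD]

/-- Moments of one parity only determine the sign of the truncated moment form. -/
theorem sum_norm_sq_le_neg_one_pow_mul_sum_moments {N p : ℕ} (hp : p < 2) (c : Fin N → ℂ)
    {b : ℕ → ℂ} (hb : ∀ i, i ≤ 2 * N → b i = ∑ k : Fin N, if i = 2 * (k : ℕ) + p then c k else 0) :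
    1 / ((2 * N).factorial : ℝ) * ∑ k, ‖c k‖ ^ 2 ≤ (-1) ^ p * ∑ i ∈ Finset.range (2 * N + 1),
      (-2) ^ i / (i.factorial : ℝ) * ‖b i‖ ^ 2 := by
  have hsum : ∑ k : Fin N, (-2) ^ (2 * (k : ℕ) + p) / ((2 * (k : ℕ) + p).factorial : ℝ) * ‖c k‖ ^ 2
      = ∑ i ∈ Finset.range (2 * N + 1), (-2) ^ i / (i.factorial : ℝ) * ‖b i‖ ^ 2 := by
    refine Finset.sum_of_injOn (fun k : Fin N => 2 * (k : ℕ) + p) ?_ ?_ ?_ ?_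
    · intro k _ l _ h
      simp only at h
      exact Fin.ext (by omega)
    · intro k _
      have := k.2
      simp only [Finset.coe_range, Set.mem_Iio]
      omega
    · intro i hi hni
      rw [hb i (by simpa [Nat.lt_succ_iff] using hi), Finset.sum_eq_zero]
      · simp
      · intro k _
        exact if_neg fun h => hni ⟨k, by simp, h.symm⟩
    · intro k _
      have hk := k.2
      rw [hb _ (by omega), Finset.sum_eq_single k]
      · simp
      · intro l _ hl
        exact if_neg fun h => hl (Fin.ext (by omega))
      · simp
  rw [← hsum, Finset.mul_sum, Finset.mul_sum]
  refine Finset.sum_le_sum fun k _ => ?_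
  have hk := k.2
  have hsign : (-1 : ℝ) ^ p * (-2) ^ (2 * (k : ℕ) + p) = 2 ^ (2 * (k : ℕ) + p) := by
    rw [neg_pow 2, ← mul_assoc, ← pow_add, show p + (2 * (k : ℕ) + p) = 2 * (k + p) by ring,
      pow_mul]
    simp
  rw [← mul_assoc, mul_div_assoc', hsign]
  gcongr
  · exact one_le_pow₀ one_le_two
  · omega

/-- Test functions on whose span the Gaussian Hankel form has the strict sign `(-1)^p`. -/
theorem exists_testFun_family_hankelQF_sign (N : ℕ) {p : ℕ} (hp : p < 2) :
    ∃ v : Fin N → ℝ → ℂ, (∀ k, v k ∈ testFunctionsOn (Set.Ioi 0)) ∧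
      ∀ c : Fin N → ℂ, c ≠ 0 → 0 < (((-1) ^ p : ℝ) : ℂ) *
        hankelQF (fun t : ℝ => ((Real.exp (-t ^ 2) : ℝ) : ℂ)) (∑ k, c k • v k) := by
  choose C hC using fun k : Fin N =>
    exists_contDiff_dual_moments_scaled (2 * N) ⟨2 * (k : ℕ) + p, by have := k.2; omega⟩
  set C₀ : ℝ := ∑ k, |C k| with hC₀
  have hCle : ∀ k, C k ≤ C₀ := fun k => (le_abs_self _).trans
    (Finset.single_le_sum (f := fun k => |C k|) (fun _ _ => abs_nonneg _) (Finset.mem_univ k))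
  set n : ℕ := 2 * N + 1 with hn
  set K : ℝ := n.succ / (n.factorial * n) with hK
  have hK0 : 0 ≤ K := by positivity
  obtain ⟨ε, hε0, hε, hεD⟩ := exists_pos_le_half_sq_mul_lt
    (D := 2 ^ n * K * C₀ ^ 2 * N) (a := 1 / ((2 * N).factorial : ℝ)) (by positivity) (by positivity)
  choose G hGd hGc hGs hGm hGn using fun k => hC k ε hε0 (by linarith)
  have hGt : ∀ k, (fun t => (G k t : ℂ)) ∈ testFunctionsOn (Set.Ioo 0 ε) := fun k =>
    ⟨Complex.ofRealCLM.contDiff.comp (hGd k), (hGc k).comp_left Complex.ofReal_zero,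
      (closure_mono (Function.support_comp_subset Complex.ofReal_zero (G k))).trans (hGs k)⟩
  refine ⟨fun k t => (Real.exp (t ^ 2) : ℂ) * G k t, fun k => ?_, fun c hc => ?_⟩
  · refine ⟨ContDiff.mul (Complex.ofRealCLM.contDiff.comp
      (Real.contDiff_exp.comp (contDiff_id.pow 2))) (hGt k).1,
      (hGt k).2.1.mul_left, tsupport_mul_subset_right.trans ((hGt k).2.2.trans ?_)⟩
    exact fun t ht => ht.1
  set g : ℝ → ℂ := ∑ k, c k • fun t => (G k t : ℂ) with hg
  obtain ⟨hgd, hgc, hgs⟩ : g ∈ testFunctionsOn (Set.Ioo 0 ε) :=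
    Submodule.sum_mem _ fun k _ => Submodule.smul_mem _ _ (hGt k)
  have hgt : ∀ t, g t = ∑ k, c k * (G k t : ℂ) := fun t => by simp [hg]
  have hGi : ∀ k, Integrable (G k) := fun k =>
    (hGd k).continuous.integrable_of_hasCompactSupport (hGc k)
  have hfg : (∑ k, c k • fun t => (Real.exp (t ^ 2) : ℂ) * (G k t : ℂ))
      = fun t => (Real.exp (t ^ 2) : ℂ) * g t := by
    ext t
    simp only [Finset.sum_apply, Pi.smul_apply, smul_eq_mul, hgt, Finset.mul_sum]
    exact Finset.sum_congr rfl fun k _ => by ring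
  rw [hfg, hankelQF_gaussian_eq_laplaceQF hgd.continuous hgc (hgs.trans fun t ht => ht.1)]
  have hmom : ∀ i, i ≤ 2 * N → ∫ t : ℝ, (t : ℂ) ^ i * g t
      = ∑ k : Fin N, if i = 2 * (k : ℕ) + p then c k else 0 := by
    intro i hi
    have : ∀ t : ℝ, (t : ℂ) ^ i * g t = ∑ k, c k * ((t ^ i * G k t : ℝ) : ℂ) := by
      intro t
      rw [hgt, Finset.mul_sum]
      exact Finset.sum_congr rfl fun k _ => by push_cast; ring
    simp_rw [this]
    rw [integral_finsetSum _ fun k _ => Integrable.const_mul (Integrable.ofReal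
      (Continuous.integrable_of_hasCompactSupport
        ((continuous_pow i).mul (hGd k).continuous) (hGc k).mul_left)) _]
    refine Finset.sum_congr rfl fun k _ => ?_
    rw [integral_const_mul, integral_complex_ofReal, hGm k i hi]
    split_ifs <;> simp
  have hL1 : ε ^ (2 * N) * ∫ t, ‖g t‖ ≤ C₀ * ∑ k, ‖c k‖ := by
    have hle : ∫ t, ‖g t‖ ≤ ∑ k, ‖c k‖ * ∫ t, |G k t| := by
      calc ∫ t, ‖g t‖ ≤ ∫ t, ∑ k, ‖c k‖ * |G k t| := by
            refine integral_mono (hgd.continuous.integrable_of_hasCompactSupport hgc).norm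
              (integrable_finsetSum _ fun k _ => (hGi k).abs.const_mul _) fun t => ?_
            simp only [hgt]
            refine (norm_sum_le _ _).trans_eq (Finset.sum_congr rfl fun k _ => ?_)
            rw [norm_mul, Complex.norm_real, Real.norm_eq_abs]
        _ = _ := by
            rw [integral_finsetSum _ fun k _ => (hGi k).abs.const_mul _]
            simp_rw [integral_const_mul]
    calc _ ≤ ε ^ (2 * N) * ∑ k, ‖c k‖ * ∫ t, |G k t| := by gcongr
      _ = ∑ k, ‖c k‖ * (ε ^ (2 * N) * ∫ t, |G k t|) := by
          rw [Finset.mul_sum]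
          exact Finset.sum_congr rfl fun k _ => by ring
      _ ≤ ∑ k, ‖c k‖ * C₀ := by
          gcongr with k
          exact (hGn k).trans (hCle k)
      _ = _ := by rw [← Finset.sum_mul, mul_comm]
  have hcpos : 0 < ∑ k, ‖c k‖ ^ 2 := by
    obtain ⟨k, hk⟩ := Function.ne_iff.1 hc
    exact Finset.sum_pos' (fun _ _ => by positivity)
      ⟨k, Finset.mem_univ k, pow_pos (norm_pos_iff.2 hk) 2⟩
  have herr : (2 * ε ^ 2) ^ n * K * (∫ t, ‖g t‖) ^ 2
      < 1 / ((2 * N).factorial : ℝ) * ∑ k, ‖c k‖ ^ 2 := by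
    have hI : 0 ≤ ∫ t, ‖g t‖ := integral_nonneg fun _ => norm_nonneg _
    have hcs : (∑ k, ‖c k‖) ^ 2 ≤ N * ∑ k, ‖c k‖ ^ 2 := by
      simpa using sq_sum_le_card_mul_sum_sq (s := Finset.univ) (f := fun k => ‖c k‖)
    calc (2 * ε ^ 2) ^ n * K * (∫ t, ‖g t‖) ^ 2
        = 2 ^ n * K * ε ^ 2 * (ε ^ (2 * N) * ∫ t, ‖g t‖) ^ 2 := by
          rw [hn]
          ring
      _ ≤ 2 ^ n * K * ε ^ 2 * (C₀ * ∑ k, ‖c k‖) ^ 2 := by gcongr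
      _ = 2 ^ n * K * ε ^ 2 * C₀ ^ 2 * (∑ k, ‖c k‖) ^ 2 := by ring
      _ ≤ 2 ^ n * K * ε ^ 2 * C₀ ^ 2 * (N * ∑ k, ‖c k‖ ^ 2) := by gcongr
      _ = ε ^ 2 * (2 ^ n * K * C₀ ^ 2 * N) * ∑ k, ‖c k‖ ^ 2 := by ring
      _ < _ := by gcongr
  have hmain := sum_norm_sq_le_neg_one_pow_mul_sum_moments hp c hmom
  have hest := (Complex.abs_re_le_norm _).trans
    (norm_laplaceQF_sub_moments_le hgd.continuous hgc hε hgs (n := n) (Nat.succ_pos _))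
  rw [Complex.sub_re, Complex.ofReal_re, ← hK] at hest
  have him : (laplaceQF g).im = 0 := Complex.conj_eq_iff_im.1 (conj_laplaceQF g)
  rw [Complex.pos_iff, Complex.re_ofReal_mul, Complex.im_ofReal_mul, him, mul_zero]
  refine ⟨?_, rfl⟩
  obtain ⟨h1, h2⟩ := abs_le.1 hest
  rw [← hn] at hmain
  have hlt := herr.trans_le hmain
  interval_cases p
  · rw [pow_zero, one_mul] at hlt ⊢
    linarith
  · rw [pow_one, neg_one_mul] at hlt ⊢
    linarith

theorem exists_submodule_hankelQF_sign (N : ℕ) {p : ℕ} (hp : p < 2) :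
    ∃ L : Submodule ℂ (ℝ → ℂ), (∀ f ∈ L, IsTestFun f) ∧ Module.finrank ℂ L = N ∧
      ∀ f ∈ L, f ≠ 0 → 0 < (((-1) ^ p : ℝ) : ℂ) *
        hankelQF (fun t : ℝ => ((Real.exp (-t ^ 2) : ℝ) : ℂ)) f := by
  obtain ⟨v, hv, hpos⟩ := exists_testFun_family_hankelQF_sign N hp
  refine ⟨Submodule.span ℂ (Set.range v), fun f hf => ?_, ?_, fun f hf hf0 => ?_⟩
  · exact (Submodule.span_le.2 (Set.range_subset_iff.2 hv) : _ ≤ testFunctionsOn (Set.Ioi 0)) hf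
  · have hli : LinearIndependent ℂ v := by
      rw [Fintype.linearIndependent_iff]
      intro c hc
      by_contra! hne
      have := hpos c (Function.ne_iff.2 hne)
      rw [hc] at this
      simp [hankelQF] at this
    rw [finrank_span_eq_card hli, Fintype.card_fin]
  · obtain ⟨c, rfl⟩ := (Submodule.mem_span_range_iff_exists_fun ℂ).1 hf
    exact hpos c fun h => hf0 (by simp [h])

/-- For the Gaussian kernel `h(t) = e^{-t²}`, for every `N` there are `N`-dimensional
subspaces of test functions on which the Hankel form is strictly positive, respectively
strictly negative; hence the corresponding Hankel operator has infinitely many positive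
and infinitely many negative eigenvalues. -/
theorem gaussian_hankel_infinite_signature (N : ℕ) :
    (∃ Lp : Submodule ℂ (ℝ → ℂ), (∀ f ∈ Lp, IsTestFun f) ∧ Module.finrank ℂ Lp = N ∧
      ∀ f ∈ Lp, f ≠ 0 → 0 < hankelQF (fun t : ℝ => ((Real.exp (-t ^ 2) : ℝ) : ℂ)) f)
    ∧ (∃ Lm : Submodule ℂ (ℝ → ℂ), (∀ f ∈ Lm, IsTestFun f) ∧ Module.finrank ℂ Lm = N ∧
      ∀ f ∈ Lm, f ≠ 0 → hankelQF (fun t : ℝ => ((Real.exp (-t ^ 2) : ℝ) : ℂ)) f < 0) := by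
  obtain ⟨Lp, hp, hpr, hpQ⟩ := exists_submodule_hankelQF_sign N (p := 0) (by norm_num)
  obtain ⟨Lm, hm, hmr, hmQ⟩ := exists_submodule_hankelQF_sign N (p := 1) (by norm_num)
  exact ⟨⟨Lp, hp, hpr, fun f hf hf0 => by simpa using hpQ f hf hf0⟩,
    ⟨Lm, hm, hmr, fun f hf hf0 => by simpa using hmQ f hf hf0⟩⟩
end
end

section
/- Let h ∈ L¹_loc((0,∞)) be real-valued and suppose there exists κ ∈ ℝ with ∫₀^∞ |h(t)| (1+|ln t|)^{-κ} dt < ∞. If Q_h[f] ≥ 0 for all f ∈ C_c^∞((0,∞)), then there exist a positive Borel measure m on (0,∞) and a real number ϰ such that ∫₀^∞ (1+|ln λ|)^{-ϰ} λ^{-1} dm(λ) < ∞ and h(t) = ∫₀^∞ e^{-tλ} dm(λ) for almost every t > 0. -/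
open MeasureTheory
open scoped ComplexOrder

noncomputable section

open Filter Topology Polynomial
open scoped Pointwise

/-- The linear functional on polynomials with prescribed moments. -/
def momentFunctional (a : ℕ → ℝ) : ℝ[X] →ₗ[ℝ] ℝ := (Polynomial.basisMonomials ℝ).constr ℝ a

lemma momentFunctional_X_pow (a : ℕ → ℝ) (n : ℕ) : momentFunctional a (X ^ n) = a n := by
  have h := (Polynomial.basisMonomials ℝ).constr_basis ℝ a n
  rw [Polynomial.coe_basisMonomials] at h
  rw [← Polynomial.monomial_one_right_eq_X_pow]
  exact h

lemma momentFunctional_X_pow_mul_one_sub_X_pow (a : ℕ → ℝ) (m l : ℕ) :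
    momentFunctional a (X ^ m * (1 - X) ^ l) =
      ∑ k ∈ Finset.range (l + 1), (-1 : ℝ) ^ k * (l.choose k : ℝ) * a (m + k) := by
  have h : (X ^ m * (1 - X) ^ l : ℝ[X]) =
      ∑ k ∈ Finset.range (l + 1), ((-1 : ℝ) ^ k * (l.choose k : ℝ)) • X ^ (m + k) := by
    rw [sub_eq_neg_add, add_pow, Finset.mul_sum]
    refine Finset.sum_congr rfl fun k _ => ?_
    rw [neg_pow, Polynomial.smul_eq_C_mul, pow_add]
    simp
    ring
  rw [h, map_sum]
  simp [momentFunctional_X_pow]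

lemma choose_mul_X_pow_eq_sum {N j : ℕ} (hj : j ≤ N) :
    ((N.choose j : ℝ) • X ^ j : ℝ[X]) = ∑ k ∈ Finset.range (N + 1),
      ((k.choose j : ℝ) * (N.choose k : ℝ)) • (X ^ k * (1 - X) ^ (N - k)) := by
  obtain ⟨M, rfl⟩ := Nat.exists_eq_add_of_le hj
  rw [add_assoc, Finset.sum_range_add, Finset.sum_eq_zero, zero_add]
  · have h : (1 : ℝ[X]) = (X + (1 - X)) ^ M := by simp
    calc (((j + M).choose j : ℝ) • X ^ j : ℝ[X])
        = ((j + M).choose j : ℝ) • (X ^ j * (X + (1 - X)) ^ M) := by rw [← h, mul_one]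
      _ = _ := by
        rw [add_pow, Finset.mul_sum, Finset.smul_sum]
        refine Finset.sum_congr rfl fun k _ => ?_
        have hc := Nat.choose_mul (n := j + M) (k := j + k) (s := j) (by omega)
        rw [Nat.add_sub_cancel_left, Nat.add_sub_cancel_left] at hc
        have hc' : ((j + k).choose j : ℝ) * ((j + M).choose (j + k) : ℝ) =
            ((j + M).choose j : ℝ) * (M.choose k : ℝ) := by
          rw [mul_comm]; exact_mod_cast hc
        rw [hc', Nat.add_sub_add_left]
        simp only [Polynomial.smul_eq_C_mul, map_mul, map_natCast]
        ring
  · intro k hk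
    rw [Nat.choose_eq_zero_of_lt (Finset.mem_range.1 hk)]
    simp

lemma eventually_abs_choose_div_choose_sub_pow_le (j : ℕ) {ε : ℝ} (hε : 0 < ε) :
    ∀ᶠ N : ℕ in atTop, ∀ k ≤ N,
      |(k.choose j : ℝ) / (N.choose j : ℝ) - ((k : ℝ) / N) ^ j| ≤ ε := by
  induction j generalizing ε with
  | zero => simp [hε.le]
  | succ j ih =>
    have hlim : ∀ᶠ N : ℕ in atTop, (2 * j : ℝ) / N ≤ ε / 2 :=
      (tendsto_const_div_atTop_nhds_zero_nat (2 * j : ℝ)).eventually_le_const (by positivity)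
    filter_upwards [ih (ε := ε / 4) (by positivity), hlim, eventually_ge_atTop (2 * j + 1)]
      with N hN hN2 hNj k hk
    have hNj' : (2 * j + 1 : ℝ) ≤ N := by exact_mod_cast hNj
    have hkN : (k : ℝ) ≤ N := by exact_mod_cast hk
    have hk0 : (0 : ℝ) ≤ k := by positivity
    have hj0 : (0 : ℝ) ≤ j := by positivity
    have hN0 : (0 : ℝ) < N := by linarith
    have hNjp : (0 : ℝ) < N - j := by linarith
    have hrec (n : ℕ) : (n.choose (j + 1) : ℝ) * (j + 1) = n.choose j * ((n : ℝ) - j) := by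
      rcases le_or_gt j n with h | h
      · have := Nat.choose_succ_right_eq n j
        rw [← Nat.cast_sub h]
        exact_mod_cast this
      · rw [Nat.choose_eq_zero_of_lt h, Nat.choose_eq_zero_of_lt (by omega)]
        simp
    have hcN : (0 : ℝ) < N.choose j := by exact_mod_cast Nat.choose_pos (by omega)
    have hcN' : (0 : ℝ) < N.choose (j + 1) := by exact_mod_cast Nat.choose_pos (by omega)
    have hrat : (k.choose (j + 1) : ℝ) / N.choose (j + 1) =
        (k.choose j : ℝ) / N.choose j * (((k : ℝ) - j) / (N - j)) := by
      rw [div_mul_div_comm, div_eq_div_iff hcN'.ne' (by positivity)]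
      have h1 := hrec k
      have h2 := hrec N
      have hj1 : (j + 1 : ℝ) ≠ 0 := by positivity
      apply mul_right_cancel₀ hj1
      linear_combination (N.choose j * ((N : ℝ) - j)) * h1 - (k.choose j * ((k : ℝ) - j)) * h2
    set w := (k.choose j : ℝ) / N.choose j
    set y := (k : ℝ) / N
    have hy0 : 0 ≤ y := by positivity
    have hy1 : y ≤ 1 := (div_le_one hN0).2 hkN
    have hz : |((k : ℝ) - j) / (N - j)| ≤ 2 := by
      rw [abs_div, abs_of_pos hNjp, div_le_iff₀ hNjp, abs_le]
      constructor <;> linarith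
    have hzy : |((k : ℝ) - j) / (N - j) - y| ≤ ε / 2 := by
      refine le_trans ?_ hN2
      have : ((k : ℝ) - j) / (N - j) - y = - (j * (N - k) / ((N - j) * N)) := by
        simp only [y]; field_simp; ring
      rw [this, abs_neg, abs_of_nonneg (by apply div_nonneg <;> nlinarith),
        div_le_div_iff₀ (by positivity) hN0]
      nlinarith [mul_nonneg (mul_nonneg hj0 hN0.le) hk0,
        mul_nonneg (mul_nonneg hj0 hN0.le) (by linarith : (0 : ℝ) ≤ N - 2 * j)]
    rw [hrat]
    have hsplit : w * (((k : ℝ) - j) / (N - j)) - y ^ (j + 1) =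
        (w - y ^ j) * (((k : ℝ) - j) / (N - j)) + y ^ j * (((k : ℝ) - j) / (N - j) - y) := by ring
    rw [hsplit]
    refine (abs_add_le _ _).trans ?_
    rw [abs_mul, abs_mul, abs_of_nonneg (pow_nonneg hy0 j)]
    have h1 := mul_le_mul (hN k hk) hz (abs_nonneg _) (by positivity)
    have h2 := mul_le_mul (pow_le_one₀ hy0 hy1 (n := j)) hzy (abs_nonneg _) zero_le_one
    linarith

/-- Solution of the **Hausdorff moment problem** on `[0,1]`. -/
theorem exists_measure_of_completely_monotone_seq (a : ℕ → ℝ)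
    (ha : ∀ m l : ℕ, 0 ≤ ∑ k ∈ Finset.range (l + 1),
      (-1 : ℝ) ^ k * (l.choose k : ℝ) * a (m + k)) :
    ∃ ν : Measure unitInterval, IsFiniteMeasure ν ∧ ∀ n, ∫ x, (x : ℝ) ^ n ∂ν = a n := by
  set w : ℕ → ℕ → ℝ := fun N k =>
    (N.choose k : ℝ) * momentFunctional a (X ^ k * (1 - X) ^ (N - k)) with hw
  have hw0 (N k) : 0 ≤ w N k :=
    mul_nonneg (by positivity) (by rw [momentFunctional_X_pow_mul_one_sub_X_pow]; exact ha _ _)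
  have hwsum {N j : ℕ} (hj : j ≤ N) :
      a j = ∑ k ∈ Finset.range (N + 1), (k.choose j : ℝ) / (N.choose j : ℝ) * w N k := by
    have h := congrArg (momentFunctional a) (choose_mul_X_pow_eq_sum hj)
    rw [map_smul, map_sum, momentFunctional_X_pow] at h
    have hc : (N.choose j : ℝ) ≠ 0 := by exact_mod_cast (Nat.choose_pos hj).ne'
    rw [smul_eq_mul] at h
    rw [eq_comm, ← mul_right_inj' hc, h, Finset.mul_sum]
    refine Finset.sum_congr rfl fun k _ => ?_
    rw [map_smul, hw]
    simp only [smul_eq_mul]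
    field_simp
  have hwtot (N : ℕ) : ∑ k ∈ Finset.range (N + 1), w N k = a 0 := by
    rw [hwsum (Nat.zero_le N)]; simp
  let pt : ℕ → ℕ → unitInterval := fun N k => Set.projIcc 0 1 zero_le_one ((k : ℝ) / N)
  have hpt {N k : ℕ} (hk : k ≤ N) : ((pt N k : unitInterval) : ℝ) = (k : ℝ) / N := by
    have hkN : (k : ℝ) ≤ N := by exact_mod_cast hk
    have : (k : ℝ) / N ∈ Set.Icc (0 : ℝ) 1 :=
      ⟨by positivity, div_le_one_of_le₀ hkN (by positivity)⟩
    simp only [pt, Set.projIcc_of_mem zero_le_one this]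
  let M : ℕ → Measure unitInterval := fun N =>
    ∑ k ∈ Finset.range (N + 1), ENNReal.ofReal (w N k) • Measure.dirac (pt N k)
  have hMuniv (N : ℕ) : M N Set.univ = ENNReal.ofReal (a 0) := by
    simp only [M, Measure.finsetSum_apply, Measure.smul_apply, measure_univ, smul_eq_mul, mul_one]
    rw [← ENNReal.ofReal_sum_of_nonneg fun k _ => hw0 N k, hwtot]
  have hMfin (N : ℕ) : IsFiniteMeasure (M N) := ⟨by rw [hMuniv]; exact ENNReal.ofReal_lt_top⟩
  have hMint (N : ℕ) (f : C(unitInterval, ℝ)) :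
      ∫ x, f x ∂(M N) = ∑ k ∈ Finset.range (N + 1), w N k * f (pt N k) := by
    simp only [M]
    rw [integral_finsetSum_measure]
    · refine Finset.sum_congr rfl fun k _ => ?_
      rw [integral_smul_measure, integral_dirac, ENNReal.toReal_ofReal (hw0 N k), smul_eq_mul]
    · intro k _
      exact (integrable_dirac (by simp)).smul_measure ENNReal.ofReal_ne_top
  let MF : ℕ → FiniteMeasure unitInterval := fun N => ⟨M N, hMfin N⟩
  have hcomp := isCompact_setOfPred_finiteMeasure_le_of_compactSpace unitInterval (a 0).toNNReal
  have hmem (N : ℕ) : MF N ∈ {μ : FiniteMeasure unitInterval | μ.mass ≤ (a 0).toNNReal} := by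
    have : (MF N).mass = (a 0).toNNReal := by
      rw [← ENNReal.coe_inj, FiniteMeasure.ennreal_mass]
      exact hMuniv N
    exact this.le
  obtain ⟨ν, -, hν⟩ := hcomp.ultrafilter_le_nhds (Ultrafilter.map MF (hyperfilter ℕ))
    (by
      refine le_principal_iff.2 ?_
      exact Ultrafilter.mem_map.2 (Filter.univ_mem' hmem))
  have hlim : Tendsto MF (hyperfilter ℕ : Filter ℕ) (𝓝 ν) := hν
  rw [FiniteMeasure.tendsto_iff_forall_integral_tendsto] at hlim
  refine ⟨ν, inferInstance, fun n => ?_⟩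
  let f : C(unitInterval, ℝ) := ⟨fun x => (x : ℝ) ^ n, by fun_prop⟩
  have h1 := hlim (BoundedContinuousFunction.mkOfCompact f)
  have h2 : Tendsto (fun N => ∫ x, f x ∂(M N)) atTop (𝓝 (a n)) := by
    rw [Metric.tendsto_atTop']
    intro ε hε
    have ha0 : 0 ≤ a 0 := by rw [← hwtot 0]; exact Finset.sum_nonneg fun k _ => hw0 0 k
    have := (eventually_abs_choose_div_choose_sub_pow_le n
      (ε := ε / (a 0 + 1)) (by positivity)).and (eventually_ge_atTop n)
    obtain ⟨N₀, hN₀⟩ := eventually_atTop.1 this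
    refine ⟨N₀, fun N hN => ?_⟩
    obtain ⟨hNa, hNn⟩ := hN₀ N hN.le
    rw [Real.dist_eq, hMint, hwsum hNn, ← Finset.sum_sub_distrib]
    calc _ ≤ ∑ k ∈ Finset.range (N + 1), ε / (a 0 + 1) * w N k := by
            refine (Finset.abs_sum_le_sum_abs _ _).trans (Finset.sum_le_sum fun k hk => ?_)
            have hkN : k ≤ N := Nat.lt_succ_iff.1 (Finset.mem_range.1 hk)
            have hfk : f (pt N k) = ((k : ℝ) / N) ^ n := by
              simp only [f, ContinuousMap.coe_mk, hpt hkN]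
            rw [hfk, mul_comm (w N k), ← sub_mul, abs_mul, abs_of_nonneg (hw0 N k), abs_sub_comm]
            exact mul_le_mul_of_nonneg_right (hNa k hkN) (hw0 N k)
      _ = ε / (a 0 + 1) * a 0 := by rw [← Finset.mul_sum, hwtot]
      _ < ε := by
            rw [div_mul_eq_mul_div, div_lt_iff₀ (by positivity)]
            nlinarith
  exact tendsto_nhds_unique h1 (h2.mono_left Nat.hyperfilter_le_atTop)

/-- Finite measures on `[0,1]` are determined by their moments. -/
theorem measure_unitInterval_ext_of_moments {μ ν : Measure unitInterval} [IsFiniteMeasure μ]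
    [IsFiniteMeasure ν] (h : ∀ n : ℕ, ∫ x, (x : ℝ) ^ n ∂μ = ∫ x, (x : ℝ) ^ n ∂ν) : μ = ν := by
  have hfint (ρ : Measure unitInterval) [IsFiniteMeasure ρ] (f : C(unitInterval, ℝ)) :
      Integrable (fun x => f x) ρ :=
    f.continuous.integrable_of_hasCompactSupport (HasCompactSupport.of_compactSpace _)
  have hpoly (p : ℝ[X]) : ∫ x : unitInterval, p.eval (x : ℝ) ∂μ =
      ∫ x : unitInterval, p.eval (x : ℝ) ∂ν := by
    simp only [Polynomial.eval_eq_sum_range]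
    have hi (ρ : Measure unitInterval) [IsFiniteMeasure ρ] (n : ℕ) :
        Integrable (fun x : unitInterval => p.coeff n * (x : ℝ) ^ n) ρ :=
      hfint ρ ⟨fun x => p.coeff n * (x : ℝ) ^ n, by fun_prop⟩
    rw [integral_finsetSum _ fun n _ => hi μ n, integral_finsetSum _ fun n _ => hi ν n]
    simp only [integral_const_mul, h]
  refine ext_of_forall_integral_eq_of_IsFiniteMeasure fun f => ?_
  have hcl (ρ : Measure unitInterval) [IsFiniteMeasure ρ] :
      Continuous fun g : C(unitInterval, ℝ) => ∫ x, g x ∂ρ := by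
    refine (LipschitzWith.of_dist_le_mul (K := (ρ.real Set.univ).toNNReal) fun f g => ?_).continuous
    rw [dist_eq_norm, dist_eq_norm, ← integral_sub (hfint ρ f) (hfint ρ g),
      Real.coe_toNNReal _ measureReal_nonneg, mul_comm]
    exact norm_integral_le_of_norm_le_const (ae_of_all _ fun x => (f - g).norm_coe_le_norm x)
  have hdense : Dense (polynomialFunctions unitInterval : Set C(unitInterval, ℝ)) := by
    rw [dense_iff_closure_eq, ← Subalgebra.topologicalClosure_coe,
      polynomialFunctions_closure_eq_top']
    rfl
  have heq := (hcl μ).ext_on hdense (hcl ν) (by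
    rintro g ⟨p, -, rfl⟩
    exact hpoly p)
  exact congrFun heq f.toContinuousMap

/-- The kernel `H (t + s)` is positive semidefinite on `[a, ∞)`. -/
def HankelPosDefFrom (a : ℝ) (H : ℝ → ℝ) : Prop :=
  ∀ (ι : Type) [Fintype ι] (t c : ι → ℝ), (∀ i, a ≤ t i) →
    0 ≤ ∑ i, ∑ j, c i * c j * H (t i + t j)

/-- `H` grows at most linearly on `[b, ∞)`. -/
def LinearGrowthFrom (b : ℝ) (H : ℝ → ℝ) : Prop :=
  ∃ A : ℝ, ∀ t, b ≤ t → |H t| ≤ A * (1 + t)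

/-- Log-convexity at dyadic multiples together with linear growth forces a maximum at `0`. -/
lemma le_zero_of_sq_le_of_linear_growth {F : ℝ → ℝ} (hF : ∀ u, 0 ≤ u → 0 ≤ F u)
    (hsq : ∀ u, 0 ≤ u → F u ^ 2 ≤ F 0 * F (2 * u))
    (hg : ∃ A : ℝ, ∀ u, 0 ≤ u → F u ≤ A * (1 + u)) {u : ℝ} (hu : 0 ≤ u) : F u ≤ F 0 := by
  by_contra! hlt
  obtain ⟨A, hA⟩ := hg
  have h0 : 0 < F 0 := by
    rcases (hF 0 le_rfl).lt_or_eq with h | h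
    · exact h
    · have := hsq u hu
      rw [← h] at this hlt
      nlinarith
  set r := F u / F 0 with hr
  have hr1 : 1 < r := (one_lt_div h0).2 hlt
  have hpow (n : ℕ) : F 0 * r ^ (2 ^ n) ≤ F (2 ^ n * u) := by
    induction n with
    | zero => simp [hr, mul_div_cancel₀ _ h0.ne']
    | succ n ih =>
      have h := hsq (2 ^ n * u) (by positivity)
      rw [← mul_assoc, ← pow_succ'] at h
      have h2 : (F 0 * r ^ (2 ^ n)) ^ 2 ≤ F (2 ^ n * u) ^ 2 :=
        pow_le_pow_left₀ (by positivity) ih 2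
      rw [show r ^ 2 ^ (n + 1) = (r ^ 2 ^ n) ^ 2 by rw [pow_succ 2 n, pow_mul]]
      refine le_of_mul_le_mul_left ?_ h0
      nlinarith
  have hlim : Tendsto (fun N : ℕ => A * (1 / r ^ N + u * ((N : ℝ) ^ 1 / r ^ N))) atTop
      (𝓝 (A * (0 + u * 0))) := by
    have h1 : Tendsto (fun N : ℕ => 1 / r ^ N) atTop (𝓝 0) := by
      simpa using tendsto_pow_const_div_const_pow_of_one_lt 0 hr1
    exact (h1.add ((tendsto_pow_const_div_const_pow_of_one_lt 1 hr1).const_mul u)).const_mul A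
  have hlim2 := hlim.comp (tendsto_pow_atTop_atTop_of_one_lt (α := ℕ) one_lt_two)
  have hle : F 0 ≤ A * (0 + u * 0) := by
    refine ge_of_tendsto' hlim2 fun n => ?_
    have h := (hpow n).trans (hA (2 ^ n * u) (by positivity))
    have hp : 0 < r ^ (2 ^ n) := by positivity
    rw [← le_div_iff₀ hp] at h
    refine h.trans (le_of_eq ?_)
    simp only [Function.comp_apply]
    push_cast
    ring
  simp at hle
  linarith

lemma HankelPosDefFrom.sub_shift {a : ℝ} {H : ℝ → ℝ} (hH : HankelPosDefFrom a H) (ha : 0 ≤ a)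
    (hg : LinearGrowthFrom (2 * a) H) {δ : ℝ} (hδ : 0 ≤ δ) :
    HankelPosDefFrom a (fun t => H t - H (t + δ)) := by
  intro ι _ t c ht
  set F : ℝ → ℝ := fun u => ∑ i, ∑ j, c i * c j * H (t i + t j + u) with hFdef
  have hF (u : ℝ) (hu : 0 ≤ u) : 0 ≤ F u := by
    refine (hH ι (fun i => t i + u / 2) c fun i => by linarith [ht i]).trans_eq ?_
    refine Finset.sum_congr rfl fun i _ => Finset.sum_congr rfl fun j _ => ?_
    ring_nf
  have hquad (u : ℝ) (hu : 0 ≤ u) (x y : ℝ) :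
      0 ≤ x ^ 2 * F 0 + 2 * (x * y) * F u + y ^ 2 * F (2 * u) := by
    have h := hH (ι ⊕ ι) (Sum.elim t fun i => t i + u) (Sum.elim (fun i => x * c i) fun i => y * c i)
      (by rintro (i | i)
          · exact ht i
          · simp only [Sum.elim_inr]; linarith [ht i])
    refine h.trans_eq ?_
    simp only [Fintype.sum_sum_type, Sum.elim_inl, Sum.elim_inr, Finset.sum_add_distrib, hFdef,
      Finset.mul_sum]
    have e1 : ∑ i, ∑ j, x * c i * (x * c j) * H (t i + t j) =
        ∑ i, ∑ j, x ^ 2 * (c i * c j * H (t i + t j + 0)) :=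
      Finset.sum_congr rfl fun i _ => Finset.sum_congr rfl fun j _ => by ring_nf
    have e2 : (∑ i, ∑ j, x * c i * (y * c j) * H (t i + (t j + u))) +
        (∑ i, ∑ j, y * c i * (x * c j) * H (t i + u + t j)) =
        ∑ i, ∑ j, 2 * (x * y) * (c i * c j * H (t i + t j + u)) := by
      simp only [← Finset.sum_add_distrib]
      refine Finset.sum_congr rfl fun i _ => Finset.sum_congr rfl fun j _ => ?_
      rw [show t i + (t j + u) = t i + t j + u by ring, show t i + u + t j = t i + t j + u by ring]
      ring
    have e3 : ∑ i, ∑ j, y * c i * (y * c j) * H (t i + u + (t j + u)) =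
        ∑ i, ∑ j, y ^ 2 * (c i * c j * H (t i + t j + 2 * u)) :=
      Finset.sum_congr rfl fun i _ => Finset.sum_congr rfl fun j _ => by
        rw [show t i + u + (t j + u) = t i + t j + 2 * u by ring]; ring
    linarith
  have hsq (u : ℝ) (hu : 0 ≤ u) : F u ^ 2 ≤ F 0 * F (2 * u) := by
    have h := discrim_le_zero (a := F 0) (b := 2 * F u) (c := F (2 * u)) fun x => by
      have := hquad u hu x 1
      nlinarith
    rw [discrim] at h
    nlinarith
  obtain ⟨A, hA⟩ := hg
  have hA0 : 0 ≤ A := by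
    have h := (abs_nonneg _).trans (hA (2 * a) le_rfl)
    by_contra! hneg
    nlinarith
  have hgF : ∃ B : ℝ, ∀ u, 0 ≤ u → F u ≤ B * (1 + u) := by
    refine ⟨∑ i, ∑ j, |c i * c j| * (A * (1 + (t i + t j))), fun u hu => ?_⟩
    rw [Finset.sum_mul]
    refine Finset.sum_le_sum fun i _ => ?_
    rw [Finset.sum_mul]
    refine Finset.sum_le_sum fun j _ => ?_
    refine (le_abs_self _).trans ?_
    rw [abs_mul, mul_assoc]
    refine mul_le_mul_of_nonneg_left ?_ (abs_nonneg _)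
    have hij : 0 ≤ t i + t j := by linarith [ht i, ht j]
    refine (hA _ (by linarith [ht i, ht j])).trans ?_
    rw [mul_assoc]
    refine mul_le_mul_of_nonneg_left ?_ hA0
    nlinarith
  have h := le_zero_of_sq_le_of_linear_growth hF hsq hgF hδ
  simp only [hFdef, add_zero] at h
  simp only [mul_sub, Finset.sum_sub_distrib]
  linarith

lemma LinearGrowthFrom.sub_shift {b : ℝ} {H : ℝ → ℝ} (hH : LinearGrowthFrom b H) (hb : 0 ≤ b)
    {δ : ℝ} (hδ : 0 ≤ δ) : LinearGrowthFrom b (fun t => H t - H (t + δ)) := by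
  obtain ⟨A, hA⟩ := hH
  have hA0 : 0 ≤ A := by
    have h := (abs_nonneg _).trans (hA b le_rfl)
    by_contra! hneg
    nlinarith
  refine ⟨A * (2 + δ), fun t ht => (abs_sub _ _).trans ?_⟩
  have h1 := hA t ht
  have h2 := hA (t + δ) (by linarith)
  have ht0 : 0 ≤ t := hb.trans ht
  nlinarith [mul_nonneg hA0 (mul_nonneg hδ ht0)]

lemma HankelPosDefFrom.alternating_sum_nonneg {a : ℝ} (ha : 0 ≤ a) {δ : ℝ} (hδ : 0 ≤ δ) (l : ℕ)
    {H : ℝ → ℝ} (hH : HankelPosDefFrom a H) (hg : LinearGrowthFrom (2 * a) H) {t : ℝ}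
    (ht : 2 * a ≤ t) :
    0 ≤ ∑ k ∈ Finset.range (l + 1), (-1 : ℝ) ^ k * (l.choose k : ℝ) * H (t + k * δ) := by
  induction l generalizing H with
  | zero =>
    have := hH Unit (fun _ => t / 2) (fun _ => 1) (fun _ => by linarith)
    simpa using this
  | succ l ih =>
    refine (ih (hH.sub_shift ha hg hδ) (hg.sub_shift (by linarith) hδ)).trans_eq ?_
    have hshift (k : ℕ) : t + k * δ + δ = t + ((k + 1 : ℕ) : ℝ) * δ := by push_cast; ring
    simp only [hshift, mul_sub, Finset.sum_sub_distrib]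
    rw [Finset.sum_range_succ' _ (l + 1)]
    have e : ∑ k ∈ Finset.range (l + 1), (-1 : ℝ) ^ (k + 1) * ((l + 1).choose (k + 1) : ℝ) *
          H (t + ((k + 1 : ℕ) : ℝ) * δ) =
        (∑ k ∈ Finset.range (l + 1), (-1 : ℝ) ^ (k + 1) * (l.choose (k + 1) : ℝ) *
          H (t + ((k + 1 : ℕ) : ℝ) * δ)) -
        ∑ k ∈ Finset.range (l + 1), (-1 : ℝ) ^ k * (l.choose k : ℝ) *
          H (t + ((k + 1 : ℕ) : ℝ) * δ) := by
      rw [← Finset.sum_sub_distrib]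
      refine Finset.sum_congr rfl fun k _ => ?_
      rw [Nat.choose_succ_succ]
      push_cast
      ring
    have e' : ∑ k ∈ Finset.range (l + 1), (-1 : ℝ) ^ (k + 1) * (l.choose (k + 1) : ℝ) *
          H (t + ((k + 1 : ℕ) : ℝ) * δ) =
        ∑ k ∈ Finset.range l, (-1 : ℝ) ^ (k + 1) * (l.choose (k + 1) : ℝ) *
          H (t + ((k + 1 : ℕ) : ℝ) * δ) := by
      rw [Finset.sum_range_succ, Nat.choose_succ_self]
      simp
    rw [e, e', Finset.sum_range_succ' (fun k : ℕ => (-1 : ℝ) ^ k * (l.choose k : ℝ) *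
      H (t + (k : ℝ) * δ)) l, Nat.choose_zero_right, Nat.choose_zero_right]
    ring

/-- The finite-difference form of complete monotonicity on `(0, ∞)`. -/
def CompletelyMonotone (H : ℝ → ℝ) : Prop :=
  ∀ t, 0 < t → ∀ δ, 0 ≤ δ → ∀ l : ℕ,
    0 ≤ ∑ k ∈ Finset.range (l + 1), (-1 : ℝ) ^ k * (l.choose k : ℝ) * H (t + k * δ)

lemma CompletelyMonotone.nonneg {H : ℝ → ℝ} (hH : CompletelyMonotone H) {t : ℝ} (ht : 0 < t) :
    0 ≤ H t := by simpa using hH t ht 0 le_rfl 0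

lemma CompletelyMonotone.le {H : ℝ → ℝ} (hH : CompletelyMonotone H) {s t : ℝ} (hs : 0 < s)
    (hst : s ≤ t) : H t ≤ H s := by
  have h := hH s hs (t - s) (by linarith) 1
  simp [Finset.sum_range_succ] at h
  exact h

lemma integrable_rpow_unitInterval (ν : Measure unitInterval) [IsFiniteMeasure ν] {u : ℝ}
    (hu : 0 ≤ u) : Integrable (fun y : unitInterval => (y : ℝ) ^ u) ν :=
  Continuous.integrable_of_hasCompactSupport
    ((Real.continuous_rpow_const hu).comp continuous_subtype_val)
    (HasCompactSupport.of_compactSpace _)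

lemma CompletelyMonotone.exists_measure_unitInterval {H : ℝ → ℝ} (hH : CompletelyMonotone H)
    {t₀ : ℝ} (ht₀ : 0 < t₀) :
    ∃ ν : Measure unitInterval, IsFiniteMeasure ν ∧ (∀ n : ℕ, ∫ y, (y : ℝ) ^ n ∂ν = H (t₀ + n)) ∧
      ∀ u, 0 < u → ∫ y, (y : ℝ) ^ u ∂ν = H (t₀ + u) := by
  have hex (δ : ℝ) (hδ : 0 ≤ δ) := exists_measure_of_completely_monotone_seq
    (fun k => H (t₀ + k * δ)) fun m l => by
      refine (hH (t₀ + m * δ) (by positivity) δ hδ l).trans_eq ?_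
      refine Finset.sum_congr rfl fun k _ => ?_
      push_cast
      ring_nf
  obtain ⟨ν, hνfin, hν⟩ := hex 1 zero_le_one
  simp only [mul_one] at hν
  refine ⟨ν, hνfin, hν, fun u hu => ?_⟩
  have hrat (N : ℕ) (hN : 0 < N) (n : ℕ) :
      ∫ y, (y : ℝ) ^ ((n : ℝ) / N) ∂ν = H (t₀ + n / N) := by
    have hN' : (N : ℝ) ≠ 0 := by positivity
    obtain ⟨ρ, hρfin, hρ⟩ := hex (1 / N) (by positivity)
    have hpm : Measurable fun y : unitInterval => y ^ N := by fun_prop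
    have hmap : ρ.map (fun y => y ^ N) = ν := by
      have : IsFiniteMeasure (ρ.map fun y => y ^ N) := inferInstance
      refine measure_unitInterval_ext_of_moments fun k => ?_
      rw [integral_map hpm.aemeasurable (Continuous.aestronglyMeasurable (by fun_prop)), hν]
      have := hρ (N * k)
      simp only [pow_mul] at this
      simp only [Set.Icc.coe_pow]
      rw [this]
      congr 1
      push_cast
      field_simp
    rw [← hmap, integral_map hpm.aemeasurable
      (integrable_rpow_unitInterval (ρ.map _) (by positivity)).aestronglyMeasurable]
    refine Eq.trans ?_ ((hρ n).trans (by ring_nf))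
    refine integral_congr_ae (ae_of_all _ fun y => ?_)
    have hy := y.2.1
    simp only [Set.Icc.coe_pow]
    rw [← Real.rpow_natCast, ← Real.rpow_mul hy, mul_div_cancel₀ _ hN', Real.rpow_natCast]
  have hcont : Tendsto (fun v : ℝ => ∫ y, (y : ℝ) ^ v ∂ν) (𝓝 u) (𝓝 (∫ y, (y : ℝ) ^ u ∂ν)) := by
    refine tendsto_integral_filter_of_dominated_convergence (fun _ => 1) ?_ ?_
      (integrable_const 1) ?_
    · filter_upwards [lt_mem_nhds hu] with v hv
      exact (integrable_rpow_unitInterval ν hv.le).aestronglyMeasurable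
    · filter_upwards [lt_mem_nhds hu] with v hv
      refine ae_of_all _ fun y => ?_
      rw [Real.norm_of_nonneg (Real.rpow_nonneg y.2.1 _)]
      exact Real.rpow_le_one y.2.1 y.2.2 hv.le
    · refine ae_of_all _ fun y => ?_
      exact (Real.continuousAt_const_rpow' hu.ne').tendsto
  have hfl : Tendsto (fun N : ℕ => (⌊u * N⌋₊ : ℝ) / N) atTop (𝓝 u) :=
    (tendsto_nat_floor_mul_div_atTop hu.le).comp tendsto_natCast_atTop_atTop
  have hce : Tendsto (fun N : ℕ => (⌈u * N⌉₊ : ℝ) / N) atTop (𝓝 u) :=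
    (tendsto_nat_ceil_mul_div_atTop hu.le).comp tendsto_natCast_atTop_atTop
  refine le_antisymm ?_ ?_
  · refine le_of_tendsto (hcont.comp hce) ?_
    filter_upwards [eventually_gt_atTop 0] with N hN
    have hN' : (0 : ℝ) < N := by exact_mod_cast hN
    simp only [Function.comp_apply]
    rw [hrat N hN]
    refine hH.le (by linarith) ?_
    have : u ≤ (⌈u * N⌉₊ : ℝ) / N := (le_div_iff₀ hN').2 (Nat.le_ceil _)
    linarith
  · refine ge_of_tendsto (hcont.comp hfl) ?_
    filter_upwards [eventually_gt_atTop 0] with N hN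
    have hN' : (0 : ℝ) < N := by exact_mod_cast hN
    simp only [Function.comp_apply]
    rw [hrat N hN]
    refine hH.le (by positivity) ?_
    have : (⌊u * N⌋₊ : ℝ) / N ≤ u := (div_le_iff₀ hN').2 (Nat.floor_le (by positivity))
    linarith

/-- **Bernstein's theorem** for completely monotone functions on `(0, ∞)`. -/
theorem CompletelyMonotone.exists_measure {H : ℝ → ℝ} (hH : CompletelyMonotone H) :
    ∃ m : Measure ℝ, SFinite m ∧ m (Set.Iio 0) = 0 ∧
      ∀ t, 0 < t → ∫⁻ l, ENNReal.ofReal (Real.exp (-t * l)) ∂m = ENNReal.ofReal (H t) := by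
  obtain ⟨ν, hνfin, hνn, -⟩ := hH.exists_measure_unitInterval one_pos
  set P : Set unitInterval := {y | 0 < (y : ℝ)} with hP
  have hPm : MeasurableSet P := measurableSet_lt measurable_const measurable_subtype_coe
  have key (t : ℝ) (ht : 0 < t) :
      ∫⁻ y in P, ENNReal.ofReal ((y : ℝ) ^ (t - 1)) ∂ν = ENNReal.ofReal (H t) := by
    obtain ⟨t₀, ht₀, ht₀t, ht₀1⟩ : ∃ t₀ : ℝ, 0 < t₀ ∧ t₀ < t ∧ t₀ < 1 :=
      ⟨min t 1 / 2, by positivity, by linarith [min_le_left t 1, lt_min ht one_pos],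
        by linarith [min_le_right t 1, lt_min ht one_pos]⟩
    obtain ⟨ρ, hρfin, -, hρ⟩ := hH.exists_measure_unitInterval ht₀
    have hm (v : ℝ) : Measurable fun y : unitInterval => ENNReal.ofReal ((y : ℝ) ^ v) := by
      fun_prop
    have hρν : ρ.withDensity (fun y => ENNReal.ofReal ((y : ℝ) ^ (1 - t₀))) = ν := by
      have : IsFiniteMeasure (ρ.withDensity (fun y => ENNReal.ofReal ((y : ℝ) ^ (1 - t₀)))) :=
        isFiniteMeasure_withDensity_ofReal
          (integrable_rpow_unitInterval ρ (by linarith)).hasFiniteIntegral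
      refine measure_unitInterval_ext_of_moments fun n => ?_
      rw [integral_withDensity_eq_integral_toReal_smul (hm _)
        (ae_of_all _ fun _ => ENNReal.ofReal_lt_top), hνn,
        show (1 : ℝ) + n = t₀ + (1 - t₀ + n) by ring, ← hρ _ (by positivity [sub_pos.2 ht₀1])]
      refine integral_congr_ae (ae_of_all _ fun y => ?_)
      simp only
      rw [ENNReal.toReal_ofReal (Real.rpow_nonneg y.2.1 _), smul_eq_mul, ← Real.rpow_natCast,
        ← Real.rpow_add_of_nonneg y.2.1 (by linarith) (by positivity)]
    rw [← hρν, setLIntegral_withDensity_eq_setLIntegral_mul _ (hm _) (hm _) hPm,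
      ← add_sub_cancel t₀ t, ← hρ _ (sub_pos.2 ht₀t),
      ofReal_integral_eq_lintegral_ofReal (integrable_rpow_unitInterval ρ (by linarith))
        (ae_of_all _ fun y => Real.rpow_nonneg y.2.1 _), ← lintegral_indicator hPm]
    refine lintegral_congr fun y => ?_
    rcases y.2.1.eq_or_lt with hy | hy
    · have hyP : y ∉ P := fun hmem => absurd hy (ne_of_lt hmem)
      rw [Set.indicator_of_notMem hyP, ← hy,
        Real.zero_rpow (sub_pos.2 ht₀t).ne', ENNReal.ofReal_zero]
    · rw [Set.indicator_of_mem (by exact hy)]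
      simp only [Pi.mul_apply]
      rw [← ENNReal.ofReal_mul (Real.rpow_nonneg y.2.1 _), ← Real.rpow_add hy]
      ring_nf
  have hlog : Measurable fun y : unitInterval => -Real.log y := by fun_prop
  have hinv : Measurable fun y : unitInterval => ENNReal.ofReal ((y : ℝ)⁻¹) := by fun_prop
  refine ⟨Measure.map (fun y : unitInterval => -Real.log y)
    ((ν.restrict P).withDensity fun y => ENNReal.ofReal ((y : ℝ)⁻¹)), inferInstance, ?_,
    fun t ht => ?_⟩
  · rw [Measure.map_apply hlog measurableSet_Iio]
    convert measure_empty (μ := (ν.restrict P).withDensity fun y => ENNReal.ofReal ((y : ℝ)⁻¹))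
    ext y
    simpa using Real.log_nonpos y.2.1 y.2.2
  · rw [lintegral_map (by fun_prop) hlog, lintegral_withDensity_eq_lintegral_mul _ hinv
      (by fun_prop), ← key t ht]
    refine setLIntegral_congr_fun hPm fun y hy => ?_
    have hy : 0 < (y : ℝ) := hy
    simp only [Pi.mul_apply]
    rw [← ENNReal.ofReal_mul (inv_nonneg.2 hy.le), Real.rpow_sub hy, Real.rpow_one,
      Real.rpow_def_of_pos hy]
    congr 1
    rw [neg_mul_neg, mul_comm t, div_eq_inv_mul]

/-- The self-convolution of a function on the line. -/
def selfConv (β : ℝ → ℝ) (x : ℝ) : ℝ := ∫ t, β t * β (x - t)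

/-- For real `F` the Hankel form is the pairing of the kernel with the self-convolution of `F`. -/
lemma hankelQF_ofReal_eq {h F : ℝ → ℝ} (hloc : LocallyIntegrableOn h (Set.Ioi 0))
    (hF : Continuous F) {K : Set ℝ} (hK : IsCompact K) (hK0 : K ⊆ Set.Ioi 0)
    (hFK : ∀ x, x ∉ K → F x = 0) :
    hankelQF (fun t => (h t : ℂ)) (fun t => (F t : ℂ)) =
      ((∫ x, h x * selfConv F x : ℝ) : ℂ) := by
  have hFneg (x : ℝ) (hx : x ∉ Set.Ioi (0 : ℝ)) : F x = 0 := hFK x fun h => hx (hK0 h)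
  have hKK : IsCompact (K + K) := hK.add hK
  have hKK0 : K + K ⊆ Set.Ioi (0 : ℝ) := by
    rintro _ ⟨x, hx, y, hy, rfl⟩
    exact Set.mem_Ioi.2 (add_pos (Set.mem_Ioi.1 (hK0 hx)) (Set.mem_Ioi.1 (hK0 hy)))
  have hhint : Integrable ((K + K).indicator h) :=
    (hloc.integrableOn_compact_subset hKK0 hKK).integrable_indicator hKK.measurableSet
  have hone : Integrable (K.indicator fun _ => (1 : ℝ)) :=
    (integrableOn_const hK.measure_lt_top.ne).integrable_indicator hK.measurableSet
  obtain ⟨C, hC⟩ := hF.bounded_above_of_compact_support (HasCompactSupport.intro hK hFK)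
  have hfint : Integrable (Function.uncurry fun t x : ℝ => h x * F (x - t) * F t)
      (volume.prod volume) := by
    have h1 := (hone.mul_prod hhint).mul_bdd (c := C * C)
      (g := fun p : ℝ × ℝ => F (p.2 - p.1) * F p.1)
      (Continuous.aestronglyMeasurable (by fun_prop)) (ae_of_all _ fun p => by
        rw [norm_mul]
        exact mul_le_mul (hC _) (hC _) (norm_nonneg _) ((norm_nonneg _).trans (hC 0)))
    refine h1.congr (ae_of_all _ ?_)
    rintro ⟨t, x⟩
    simp only [Function.uncurry_apply_pair]
    by_cases ht : t ∈ K
    · by_cases hx : x - t ∈ K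
      · have hxK : x ∈ K + K := ⟨t, ht, x - t, hx, by ring⟩
        rw [Set.indicator_of_mem ht, Set.indicator_of_mem hxK]
        ring
      · rw [hFK _ hx]; ring
    · rw [hFK _ ht]; ring
  have hcast : hankelQF (fun t => (h t : ℂ)) (fun t => (F t : ℂ)) =
      ((∫ t, ∫ s, h (t + s) * F s * F t : ℝ) : ℂ) := by
    rw [hankelQF, setIntegral_eq_integral_of_forall_compl_eq_zero fun t ht => by
      simp [hFneg t ht], ← integral_complex_ofReal]
    refine integral_congr_ae (ae_of_all _ fun t => ?_)
    simp only
    rw [setIntegral_eq_integral_of_forall_compl_eq_zero fun s hs => by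
      simp [hFneg s hs], ← integral_complex_ofReal]
    simp [Complex.conj_ofReal]
  rw [hcast]
  congr 1
  have hshift (t : ℝ) : ∫ s, h (t + s) * F s * F t = ∫ x, h x * F (x - t) * F t := by
    rw [← integral_sub_right_eq_self (fun s => h (t + s) * F s * F t) t]
    simp
  simp only [hshift]
  rw [integral_integral_swap hfint]
  refine integral_congr_ae (ae_of_all _ fun x => ?_)
  simp only [selfConv]
  rw [← integral_const_mul]
  refine integral_congr_ae (ae_of_all _ fun t => ?_)
  simp only
  ring

/-- A smooth approximate identity at scale `ε`. -/
structure IsMollifier (β : ℝ → ℝ) (ε : ℝ) : Prop where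
  pos : 0 < ε
  contDiff : ContDiff ℝ (⊤ : ℕ∞) β
  nonneg : ∀ x, 0 ≤ β x
  eq_zero : ∀ x, x ∉ Metric.closedBall 0 ε → β x = 0
  integral_eq_one : ∫ x, β x = 1
  le_inv : ∀ x, β x ≤ ε⁻¹

lemma exists_isMollifier {ε : ℝ} (hε : 0 < ε) : ∃ β, IsMollifier β ε := by
  let b : ContDiffBump (0 : ℝ) := ⟨ε / 2, ε, by positivity, by linarith⟩
  refine ⟨b.normed volume, hε, b.contDiff_normed, b.nonneg_normed, fun x hx => ?_,
    b.integral_normed, fun x => ?_⟩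
  · rw [← Function.notMem_support, b.support_normed_eq]
    exact fun h => hx (Metric.ball_subset_closedBall h)
  · refine (b.normed_le_div_measure_closedBall_rOut volume 2 ?_ x).trans_eq ?_
    · change ε ≤ 2 * (ε / 2); linarith
    · change 2 ^ _ / volume.real (Metric.closedBall (0 : ℝ) ε) = _
      rw [Real.volume_real_closedBall hε.le]
      simp
      field_simp

namespace IsMollifier

variable {β : ℝ → ℝ} {ε : ℝ}

lemma hasCompactSupport (hβ : IsMollifier β ε) : HasCompactSupport β :=
  HasCompactSupport.intro (isCompact_closedBall 0 ε) hβ.eq_zero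

lemma integrable (hβ : IsMollifier β ε) : Integrable β :=
  hβ.contDiff.continuous.integrable_of_hasCompactSupport hβ.hasCompactSupport

lemma selfConv_eq_convolution (β : ℝ → ℝ) :
    selfConv β = convolution β β (ContinuousLinearMap.lsmul ℝ ℝ) volume := by
  ext x
  simp [selfConv, convolution_def]

lemma continuous_selfConv (hβ : IsMollifier β ε) : Continuous (selfConv β) := by
  rw [selfConv_eq_convolution]
  exact hβ.hasCompactSupport.continuous_convolution_right _ hβ.integrable.locallyIntegrable
    hβ.contDiff.continuous

lemma integral_selfConv (hβ : IsMollifier β ε) : ∫ x, selfConv β x = 1 := by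
  rw [selfConv_eq_convolution, integral_convolution _ hβ.integrable hβ.integrable]
  simp [hβ.integral_eq_one]

lemma abs_selfConv_le (hβ : IsMollifier β ε) (x : ℝ) : |selfConv β x| ≤ ε⁻¹ := by
  have h0 : 0 ≤ selfConv β x :=
    integral_nonneg fun t => mul_nonneg (hβ.nonneg _) (hβ.nonneg _)
  rw [abs_of_nonneg h0]
  calc selfConv β x ≤ ∫ t, β t * ε⁻¹ := by
        refine integral_mono_of_nonneg
          (ae_of_all _ fun t => mul_nonneg (hβ.nonneg _) (hβ.nonneg _))
          (hβ.integrable.mul_const _) (ae_of_all _ fun t => ?_)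
        exact mul_le_mul_of_nonneg_left (hβ.le_inv _) (hβ.nonneg _)
    _ = ε⁻¹ := by rw [integral_mul_const, hβ.integral_eq_one, one_mul]

lemma selfConv_eq_zero (hβ : IsMollifier β ε) {x : ℝ} (hx : 2 * ε < |x|) : selfConv β x = 0 := by
  refine integral_eq_zero_of_ae (ae_of_all _ fun t => ?_)
  simp only [Pi.zero_apply, mul_eq_zero]
  by_contra! hne
  have h1 : |t| ≤ ε := by
    by_contra h
    exact hne.1 (hβ.eq_zero t (by simpa using h))
  have h2 : |x - t| ≤ ε := by
    by_contra h
    exact hne.2 (hβ.eq_zero _ (by simpa [Real.dist_eq] using h))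
  have h3 := abs_add_le t (x - t)
  rw [add_sub_cancel] at h3
  linarith

lemma integrable_mul_selfConv (hβ : IsMollifier β ε) {h : ℝ → ℝ}
    (hloc : LocallyIntegrableOn h (Set.Ioi 0)) {u : ℝ} (hu : 2 * ε < u) :
    Integrable fun x => h x * selfConv β (x - u) := by
  have hsub : Metric.closedBall u (2 * ε) ⊆ Set.Ioi (0 : ℝ) := by
    intro x hx
    rw [Real.closedBall_eq_Icc] at hx
    exact lt_of_lt_of_le (by linarith) hx.1
  have hi := ((hloc.integrableOn_compact_subset hsub
    (isCompact_closedBall _ _)).integrable_indicator measurableSet_closedBall).mul_bdd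
    (c := ε⁻¹) (g := fun x => selfConv β (x - u))
    (hβ.continuous_selfConv.comp (continuous_id.sub continuous_const)).aestronglyMeasurable
    (ae_of_all _ fun x => hβ.abs_selfConv_le _)
  refine hi.congr (ae_of_all _ fun x => ?_)
  by_cases hx : x ∈ Metric.closedBall u (2 * ε)
  · simp only [Set.indicator_of_mem hx]
  · simp only
    rw [hβ.selfConv_eq_zero (by simpa [Real.dist_eq] using hx)]
    simp

lemma hankelPosDefFrom (hβ : IsMollifier β ε) {h : ℝ → ℝ}
    (hloc : LocallyIntegrableOn h (Set.Ioi 0))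
    (hpos : ∀ f : ℝ → ℂ, IsTestFun f → 0 ≤ hankelQF (fun t : ℝ => ((h t : ℝ) : ℂ)) f) :
    HankelPosDefFrom (2 * ε) fun u => ∫ x, h x * selfConv β (x - u) := by
  intro ι _ t c ht
  have hε := hβ.pos
  set F : ℝ → ℝ := fun s => ∑ i, c i * β (s - t i) with hFdef
  have hFsm : ContDiff ℝ (⊤ : ℕ∞) F :=
    ContDiff.sum fun i _ => contDiff_const.mul (hβ.contDiff.comp (contDiff_id.sub contDiff_const))
  set K : Set ℝ := ⋃ i, Metric.closedBall (t i) ε with hKdef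
  have hK : IsCompact K := isCompact_iUnion fun i => isCompact_closedBall _ _
  have hK0 : K ⊆ Set.Ioi 0 := by
    refine Set.iUnion_subset fun i x hx => ?_
    rw [Real.closedBall_eq_Icc] at hx
    exact lt_of_lt_of_le (by linarith [ht i]) hx.1
  have hFK (x : ℝ) (hx : x ∉ K) : F x = 0 := by
    refine Finset.sum_eq_zero fun i _ => ?_
    rw [hβ.eq_zero, mul_zero]
    intro hmem
    refine hx (Set.mem_iUnion.2 ⟨i, ?_⟩)
    simpa [Real.dist_eq] using hmem
  have hsupp : tsupport (fun s => (F s : ℂ)) ⊆ K :=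
    closure_minimal (fun x hx => by
      by_contra hxK
      exact hx (by simp [hFK x hxK])) hK.isClosed
  have hQ := hpos (fun s => (F s : ℂ)) ⟨Complex.ofRealCLM.contDiff.comp hFsm,
    hK.of_isClosed_subset (isClosed_tsupport _) hsupp, hsupp.trans hK0⟩
  rw [hankelQF_ofReal_eq hloc hFsm.continuous hK hK0 hFK, Complex.zero_le_real] at hQ
  refine hQ.trans_eq ?_
  have hbint (x : ℝ) (i j : ι) :
      Integrable fun s => c i * c j * (β (s - t i) * β (x - s - t j)) := by
    refine Integrable.const_mul ?_ _
    refine (hβ.integrable.comp_sub_right (t i)).mul_bdd (c := ε⁻¹)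
      (hβ.contDiff.continuous.comp
        ((continuous_const.sub continuous_id).sub continuous_const)).aestronglyMeasurable
      (ae_of_all _ fun s => ?_)
    rw [Real.norm_of_nonneg (hβ.nonneg _)]
    exact hβ.le_inv _
  have hconv (x : ℝ) : selfConv F x = ∑ i, ∑ j, c i * c j * selfConv β (x - (t i + t j)) := by
    have hexp (s : ℝ) : F s * F (x - s) =
        ∑ i, ∑ j, c i * c j * (β (s - t i) * β (x - s - t j)) := by
      simp only [hFdef, Finset.sum_mul_sum]
      refine Finset.sum_congr rfl fun i _ => Finset.sum_congr rfl fun j _ => ?_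
      ring
    simp only [selfConv, hexp]
    rw [integral_finsetSum _ fun i _ => integrable_finsetSum _ fun j _ => hbint x i j]
    refine Finset.sum_congr rfl fun i _ => ?_
    rw [integral_finsetSum _ fun j _ => hbint x i j]
    refine Finset.sum_congr rfl fun j _ => ?_
    rw [integral_const_mul, ← integral_sub_right_eq_self
      (fun s => β s * β (x - (t i + t j) - s)) (t i)]
    congr 2
    ext s
    ring_nf
  have hfint (i j : ι) :
      Integrable fun x => c i * c j * (h x * selfConv β (x - (t i + t j))) :=
    (hβ.integrable_mul_selfConv hloc (by linarith [ht i, ht j])).const_mul _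
  have hexp2 (x : ℝ) : h x * selfConv F x =
      ∑ i, ∑ j, c i * c j * (h x * selfConv β (x - (t i + t j))) := by
    simp only [hconv, Finset.mul_sum]
    refine Finset.sum_congr rfl fun i _ => Finset.sum_congr rfl fun j _ => ?_
    ring
  simp only [hexp2]
  rw [integral_finsetSum _ fun i _ => integrable_finsetSum _ fun j _ => hfint i j]
  refine Finset.sum_congr rfl fun i _ => ?_
  rw [integral_finsetSum _ fun j _ => hfint i j]
  refine Finset.sum_congr rfl fun j _ => ?_
  rw [integral_const_mul]

lemma linearGrowthFrom (hβ : IsMollifier β ε) {h : ℝ → ℝ}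
    (hw : IntegrableOn (fun x => |h x| * (x + x⁻¹)⁻¹) (Set.Ioi 0)) :
    LinearGrowthFrom (2 * (2 * ε)) fun u => ∫ x, h x * selfConv β (x - u) := by
  have hε := hβ.pos
  set W := ∫ x in Set.Ioi (0 : ℝ), |h x| * (x + x⁻¹)⁻¹ with hW
  have hW0 : 0 ≤ W := setIntegral_nonneg measurableSet_Ioi fun x (hx : 0 < x) => by positivity
  refine ⟨W * (ε⁻¹ * (1 + 2 * ε + (2 * ε)⁻¹)), fun u hu => ?_⟩
  have hbound : |∫ x, h x * selfConv β (x - u)| ≤ W * (ε⁻¹ * (u + 2 * ε + (2 * ε)⁻¹)) := by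
    rw [← Real.norm_eq_abs, hW, ← integral_mul_const, ← integral_indicator measurableSet_Ioi]
    refine norm_integral_le_of_norm_le
      ((integrable_indicator_iff measurableSet_Ioi).2 (hw.mul_const _)) (ae_of_all _ fun x => ?_)
    rw [norm_mul, Real.norm_eq_abs, Real.norm_eq_abs]
    by_cases hx : |x - u| ≤ 2 * ε
    · have hx' := abs_le.1 hx
      have hx0 : 0 < x := by linarith
      rw [Set.indicator_of_mem (by exact hx0), mul_assoc]
      refine mul_le_mul_of_nonneg_left ?_ (abs_nonneg _)
      have h1 : x + x⁻¹ ≤ u + 2 * ε + (2 * ε)⁻¹ := by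
        have : x⁻¹ ≤ (2 * ε)⁻¹ := inv_anti₀ (by positivity) (by linarith)
        linarith
      have h2 : 0 < x + x⁻¹ := by positivity
      rw [inv_mul_eq_div, le_div_iff₀ h2]
      exact mul_le_mul (hβ.abs_selfConv_le _) h1 h2.le (by positivity)
    · rw [hβ.selfConv_eq_zero (not_le.1 hx), abs_zero, mul_zero]
      refine Set.indicator_nonneg (fun x (hx : 0 < x) => ?_) _
      have : 0 ≤ u := by linarith
      positivity
  refine hbound.trans ?_
  rw [mul_assoc, mul_assoc]
  refine mul_le_mul_of_nonneg_left (mul_le_mul_of_nonneg_left ?_ (by positivity)) hW0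
  have h1 : 0 ≤ (2 * ε)⁻¹ := by positivity
  nlinarith [mul_nonneg h1 (by linarith : 0 ≤ u)]

end IsMollifier

/-- Mollification converges almost everywhere on `(0, ∞)`. -/
lemma ae_tendsto_integral_mul_selfConv {h : ℝ → ℝ} (hloc : LocallyIntegrableOn h (Set.Ioi 0))
    {β : ℕ → ℝ → ℝ} {ε : ℕ → ℝ} (hβ : ∀ n, IsMollifier (β n) (ε n))
    (hε : Tendsto ε atTop (𝓝 0)) :
    ∀ᵐ u, 0 < u →
      Tendsto (fun n => ∫ x, h x * selfConv (β n) (x - u)) atTop (𝓝 (h u)) := by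
  set H : ℕ → ℝ → ℝ := fun k => (Set.Ici (1 / ((k : ℝ) + 1))).indicator h with hH
  have hHloc (k : ℕ) : LocallyIntegrable (H k) := by
    rw [locallyIntegrable_iff]
    intro K hK
    rw [hH, IntegrableOn, integrable_indicator_iff measurableSet_Ici, IntegrableOn,
      Measure.restrict_restrict measurableSet_Ici]
    refine hloc.integrableOn_compact_subset ?_ (hK.inter_left isClosed_Ici)
    intro x hx
    exact lt_of_lt_of_le (by positivity : (0 : ℝ) < 1 / ((k : ℝ) + 1)) hx.1
  have hae := ae_all_iff.2 fun k =>
    IsUnifLocDoublingMeasure.ae_tendsto_average_norm_sub (μ := volume) (hHloc k) 1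
  filter_upwards [hae] with u hu hu0
  obtain ⟨k, hk⟩ := exists_nat_one_div_lt hu0
  have hmem : u ∈ Set.Ici (1 / ((k : ℝ) + 1)) := hk.le
  have hHu : H k u = h u := Set.indicator_of_mem hmem h
  have hδ : Tendsto (fun n => 2 * ε n) atTop (𝓝[>] 0) := by
    refine tendsto_nhdsWithin_iff.2 ⟨by simpa using hε.const_mul 2, Eventually.of_forall fun n => ?_⟩
    have := (hβ n).pos
    exact (by positivity : 0 < 2 * ε n)
  have hav := hu k (fun _ => u) (fun n => 2 * ε n) hδ (Eventually.of_forall fun n => by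
    have := (hβ n).pos
    exact Metric.mem_closedBall_self (by positivity))
  have hlim := tendsto_integral_smul_of_tendsto_average_norm_sub
    (g := fun n x => selfConv (β n) (x - u)) 4 hav
    (Eventually.of_forall fun n => (hHloc k).integrableOn_isCompact (isCompact_closedBall _ _))
    (by
      refine tendsto_const_nhds.congr fun n => ?_
      rw [integral_sub_right_eq_self (selfConv (β n)) u, (hβ n).integral_selfConv])
    (Eventually.of_forall fun n x hx => by
      by_contra hmem
      exact hx ((hβ n).selfConv_eq_zero (by simpa [Real.dist_eq] using hmem)))
    (Eventually.of_forall fun n x => by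
      have := (hβ n).pos
      refine ((hβ n).abs_selfConv_le _).trans_eq ?_
      rw [Real.volume_real_closedBall (by positivity)]
      field_simp
      norm_num)
  rw [hHu] at hlim
  refine hlim.congr' ?_
  have hev : ∀ᶠ n in atTop, 2 * ε n < u - 1 / ((k : ℝ) + 1) :=
    (hδ.mono_right nhdsWithin_le_nhds).eventually_lt_const (by linarith)
  filter_upwards [hev] with n hn
  refine integral_congr_ae (ae_of_all _ fun x => ?_)
  simp only [smul_eq_mul]
  by_cases hx : |x - u| ≤ 2 * ε n
  · have hxk : x ∈ Set.Ici (1 / ((k : ℝ) + 1)) := by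
      have := (abs_le.1 hx).1
      simp only [Set.mem_Ici]
      linarith
    rw [hH]
    simp only [Set.indicator_of_mem hxk]
    ring
  · rw [(hβ n).selfConv_eq_zero (not_le.1 hx)]
    ring

/-- Every power of `1 + |log t|` is dominated by a multiple of `t + t⁻¹`. -/
lemma exists_inv_add_inv_le_mul_rpow (κ : ℝ) :
    ∃ C : ℝ, ∀ t : ℝ, 0 < t → (t + t⁻¹)⁻¹ ≤ C * (1 + |Real.log t|) ^ (-κ) := by
  set k := ⌈κ⌉₊
  refine ⟨k.factorial * Real.exp 1, fun t ht => ?_⟩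
  have h1 : 1 ≤ 1 + |Real.log t| := by linarith [abs_nonneg (Real.log t)]
  have h0 : 0 < 1 + |Real.log t| := by linarith
  have hpow : (1 + |Real.log t|) ^ κ ≤ k.factorial * Real.exp (1 + |Real.log t|) := by
    calc (1 + |Real.log t|) ^ κ ≤ (1 + |Real.log t|) ^ (k : ℝ) :=
          Real.rpow_le_rpow_of_exponent_le h1 (Nat.le_ceil κ)
      _ = (1 + |Real.log t|) ^ k := Real.rpow_natCast _ _
      _ ≤ _ := by
          have := Real.pow_div_factorial_le_exp _ h0.le k
          rw [div_le_iff₀ (by positivity)] at this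
          linarith
  have hexp : Real.exp |Real.log t| ≤ t + t⁻¹ := by
    rcases abs_choice (Real.log t) with h | h
    · rw [h, Real.exp_log ht]
      have : 0 < t⁻¹ := by positivity
      linarith
    · rw [h, Real.exp_neg, Real.exp_log ht]
      linarith
  have hfin : (1 + |Real.log t|) ^ κ ≤ k.factorial * Real.exp 1 * (t + t⁻¹) := by
    refine hpow.trans ?_
    rw [Real.exp_add, ← mul_assoc]
    gcongr
  rw [Real.rpow_neg h0.le, ← div_eq_mul_inv, le_div_iff₀ (Real.rpow_pos_of_pos h0 _),
    inv_mul_le_iff₀ (by positivity), mul_comm]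
  exact hfin

lemma integrableOn_mul_inv_add_inv {h : ℝ → ℝ} {κ : ℝ}
    (hloc : LocallyIntegrableOn h (Set.Ioi 0))
    (hκ : IntegrableOn (fun t : ℝ => |h t| * (1 + |Real.log t|) ^ (-κ)) (Set.Ioi 0)) :
    IntegrableOn (fun x => |h x| * (x + x⁻¹)⁻¹) (Set.Ioi 0) := by
  obtain ⟨C, hC⟩ := exists_inv_add_inv_le_mul_rpow κ
  refine (hκ.const_mul C).mono' ?_ ?_
  · exact hloc.aestronglyMeasurable.norm.mul
      (Measurable.aestronglyMeasurable (by fun_prop))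
  · filter_upwards [ae_restrict_mem measurableSet_Ioi] with x (hx : 0 < x)
    rw [Real.norm_of_nonneg (by positivity), mul_left_comm]
    exact mul_le_mul_of_nonneg_left (hC x hx) (abs_nonneg _)

/-- A kernel with a positive Hankel form agrees almost everywhere with a completely monotone
function. -/
lemma exists_completelyMonotone_ae_eq {h : ℝ → ℝ} (hloc : LocallyIntegrableOn h (Set.Ioi 0))
    (hw : IntegrableOn (fun x => |h x| * (x + x⁻¹)⁻¹) (Set.Ioi 0))
    (hpos : ∀ f : ℝ → ℂ, IsTestFun f → 0 ≤ hankelQF (fun t : ℝ => ((h t : ℝ) : ℂ)) f) :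
    ∃ H : ℝ → ℝ, CompletelyMonotone H ∧ ∀ᵐ t, 0 < t → h t = H t := by
  set ε : ℕ → ℝ := fun n => 1 / ((n : ℝ) + 1) with hεdef
  have hε0 : Tendsto ε atTop (𝓝 0) := tendsto_one_div_add_atTop_nhds_zero_nat
  choose β hβ using fun n : ℕ => exists_isMollifier (ε := ε n) Nat.one_div_pos_of_nat
  set G : ℕ → ℝ → ℝ := fun n u => ∫ x, h x * selfConv (β n) (x - u) with hG
  have hsum (n : ℕ) {t δ : ℝ} (hδ : 0 ≤ δ) (l : ℕ) (ht : 2 * (2 * ε n) ≤ t) :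
      0 ≤ ∑ k ∈ Finset.range (l + 1), (-1 : ℝ) ^ k * (l.choose k : ℝ) * G n (t + k * δ) :=
    ((hβ n).hankelPosDefFrom hloc hpos).alternating_sum_nonneg
      (by have := (hβ n).pos; positivity) hδ l ((hβ n).linearGrowthFrom hw) ht
  have hsmall {t : ℝ} (ht : 0 < t) : ∀ᶠ n in atTop, 2 * (2 * ε n) ≤ t := by
    have : Tendsto (fun n => 2 * (2 * ε n)) atTop (𝓝 0) := by
      simpa using (hε0.const_mul 2).const_mul 2
    exact (this.eventually_lt_const ht).mono fun n hn => hn.le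
  have hae := ae_tendsto_integral_mul_selfConv hloc hβ hε0
  have hlim (t : ℝ) : ∃ L, 0 < t → Tendsto (fun n => G n t) (hyperfilter ℕ) (𝓝 L) := by
    rcases le_or_gt t 0 with ht | ht
    · exact ⟨0, fun h => absurd h ht.not_gt⟩
    obtain ⟨s, hs, hst⟩ : ∃ s ∈ Set.Ioo 0 t,
        0 < s → Tendsto (fun n => G n s) atTop (𝓝 (h s)) := by
      have hfreq : ∃ᵐ s, s ∈ Set.Ioo 0 t := by
        rw [frequently_ae_mem_iff, Real.volume_Ioo]
        simpa using ht
      obtain ⟨s, h1, h2⟩ := (hfreq.and_eventually hae).exists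
      exact ⟨s, h1, h2⟩
    have hmem : ∀ᶠ n in (hyperfilter ℕ : Filter ℕ), G n t ∈ Set.Icc 0 (h s + 1) := by
      refine Nat.hyperfilter_le_atTop ?_
      filter_upwards [hsmall hs.1, (hst hs.1).eventually_le_const (lt_add_one (h s))] with n hn hn'
      have hnt := hsum n le_rfl 0 (hn.trans hs.2.le)
      have hns := hsum n (sub_nonneg.2 hs.2.le) 1 hn
      simp [Finset.sum_range_succ] at hnt hns
      exact ⟨hnt, hns.trans hn'⟩
    obtain ⟨L, -, hL⟩ := (isCompact_Icc (a := (0 : ℝ)) (b := h s + 1)).ultrafilter_le_nhds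
      ((hyperfilter ℕ).map fun n => G n t) (le_principal_iff.2 hmem)
    exact ⟨L, fun _ => hL⟩
  choose H hH using hlim
  refine ⟨H, fun t ht δ hδ l => ?_, ?_⟩
  · refine ge_of_tendsto (tendsto_finsetSum (Finset.range (l + 1)) fun k _ =>
      (hH (t + k * δ) (by positivity)).const_mul ((-1 : ℝ) ^ k * (l.choose k : ℝ))) ?_
    exact Nat.hyperfilter_le_atTop ((hsmall ht).mono fun n hn => hsum n hδ l hn)
  · filter_upwards [hae] with t hta ht
    exact tendsto_nhds_unique ((hta ht).mono_left Nat.hyperfilter_le_atTop) (hH t ht)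

lemma measure_singleton_zero_of_integrableOn {h H : ℝ → ℝ} {m : Measure ℝ}
    (hw : IntegrableOn (fun x => |h x| * (x + x⁻¹)⁻¹) (Set.Ioi 0))
    (hae : ∀ᵐ t, 0 < t → h t = H t)
    (hm : ∀ t, 0 < t → ∫⁻ l, ENNReal.ofReal (Real.exp (-t * l)) ∂m = ENNReal.ofReal (H t)) :
    m {0} = 0 := by
  have hle (t : ℝ) (ht : 0 < t) : m {0} ≤ ENNReal.ofReal (H t) := by
    rw [← hm t ht]
    calc m {0} = ∫⁻ l in {0}, ENNReal.ofReal (Real.exp (-t * l)) ∂m := by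
          rw [lintegral_singleton]; simp
      _ ≤ _ := setLIntegral_le_lintegral _ _
  by_contra hne
  have hfin : m {0} ≠ ⊤ := ne_top_of_le_ne_top ENNReal.ofReal_ne_top (hle 1 one_pos)
  set c := (m {0}).toReal with hc
  have hc0 : 0 < c := ENNReal.toReal_pos hne hfin
  have hcH (t : ℝ) (ht : 0 < t) : c ≤ H t := by
    have h1 := hle t ht
    have hpos : 0 < H t := ENNReal.ofReal_pos.1 ((pos_iff_ne_zero.2 hne).trans_le h1)
    exact ENNReal.toReal_le_of_le_ofReal hpos.le h1
  refine not_integrableOn_Ioi_inv (a := 1) ?_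
  have hw1 := (hw.mono_set (Set.Ioi_subset_Ioi zero_le_one)).const_mul (2 * c⁻¹)
  refine hw1.mono' (Measurable.aestronglyMeasurable (by fun_prop)) ?_
  filter_upwards [ae_restrict_mem measurableSet_Ioi, ae_restrict_of_ae hae] with t (ht : 1 < t) hh
  have ht0 : 0 < t := by linarith
  have hct : c ≤ |h t| := by rw [hh ht0]; exact (hcH t ht0).trans (le_abs_self _)
  rw [Real.norm_of_nonneg (by positivity)]
  have hinv : t⁻¹ ≤ t := (inv_le_one_of_one_le₀ ht.le).trans ht.le
  calc t⁻¹ = 2 * c⁻¹ * (c * (t + t)⁻¹) := by field_simp; ring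
    _ ≤ 2 * c⁻¹ * (|h t| * (t + t⁻¹)⁻¹) := by gcongr

/-- Lower bound for the logarithmically weighted Laplace transform of Lebesgue measure. -/
lemma le_lintegral_exp_mul_log_weight {κ K : ℝ} (hκK : κ ≤ K) (hK : 0 ≤ K) {l : ℝ} (hl : 0 < l) :
    ENNReal.ofReal (Real.exp (-2) * 2 ^ (-K)) *
        ENNReal.ofReal ((1 + |Real.log l|) ^ (-K) * l⁻¹) ≤
      ∫⁻ t in Set.Ioi (0 : ℝ), ENNReal.ofReal (Real.exp (-t * l)) *
        ENNReal.ofReal ((1 + |Real.log t|) ^ (-κ)) := by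
  have hlow (t : ℝ) (ht : t ∈ Set.Icc l⁻¹ (2 * l⁻¹)) :
      ENNReal.ofReal (Real.exp (-2) * (2 ^ (-K) * (1 + |Real.log l|) ^ (-K))) ≤
        ENNReal.ofReal (Real.exp (-t * l)) * ENNReal.ofReal ((1 + |Real.log t|) ^ (-κ)) := by
    have hli : 0 < l⁻¹ := inv_pos.2 hl
    have ht0 : 0 < t := hli.trans_le ht.1
    rw [← ENNReal.ofReal_mul (Real.exp_pos _).le]
    refine ENNReal.ofReal_le_ofReal (mul_le_mul ?_ ?_ (by positivity) (Real.exp_pos _).le)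
    · rw [Real.exp_le_exp]
      have := mul_le_mul_of_nonneg_right ht.2 hl.le
      rw [mul_assoc, inv_mul_cancel₀ hl.ne'] at this
      linarith
    · have hlog : |Real.log t| ≤ |Real.log l| + 1 := by
        have h1 := Real.log_le_log hli ht.1
        have h2 := Real.log_le_log ht0 ht.2
        rw [Real.log_mul two_ne_zero hli.ne', Real.log_inv] at h2
        rw [Real.log_inv] at h1
        have h3 := Real.log_two_lt_d9
        rw [abs_le]
        constructor
        · linarith [le_abs_self (Real.log l)]
        · linarith [neg_le_abs (Real.log l)]
      have hnl := abs_nonneg (Real.log l)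
      have hnt := abs_nonneg (Real.log t)
      rw [← Real.mul_rpow (by norm_num) (by linarith)]
      calc (2 * (1 + |Real.log l|)) ^ (-K) ≤ (1 + |Real.log t|) ^ (-K) :=
            Real.rpow_le_rpow_of_nonpos (by linarith) (by linarith) (by linarith)
        _ ≤ (1 + |Real.log t|) ^ (-κ) :=
            Real.rpow_le_rpow_of_exponent_le (by linarith) (by linarith)
  have hli : 0 < l⁻¹ := inv_pos.2 hl
  calc _ = ∫⁻ t in Set.Icc l⁻¹ (2 * l⁻¹),
        ENNReal.ofReal (Real.exp (-2) * (2 ^ (-K) * (1 + |Real.log l|) ^ (-K))) := by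
        rw [setLIntegral_const, Real.volume_Icc, ← ENNReal.ofReal_mul (by positivity),
          ← ENNReal.ofReal_mul (by positivity)]
        congr 1
        ring
    _ ≤ _ := setLIntegral_mono' measurableSet_Icc hlow
    _ ≤ _ := lintegral_mono_set fun t ht => hli.trans_le ht.1

lemma lintegral_log_weight_lt_top {h H : ℝ → ℝ} {κ : ℝ} {m : Measure ℝ} [SFinite m]
    (hκ : IntegrableOn (fun t : ℝ => |h t| * (1 + |Real.log t|) ^ (-κ)) (Set.Ioi 0))
    (hae : ∀ᵐ t, 0 < t → h t = H t)
    (hm : ∀ t, 0 < t → ∫⁻ l, ENNReal.ofReal (Real.exp (-t * l)) ∂m = ENNReal.ofReal (H t)) :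
    ∫⁻ l in Set.Ioi (0 : ℝ),
      ENNReal.ofReal ((1 + |Real.log l|) ^ (-(max κ 0)) * l⁻¹) ∂m < ⊤ := by
  set K := max κ 0
  set c := ENNReal.ofReal (Real.exp (-2) * 2 ^ (-K)) with hc
  have hc0 : c ≠ 0 := (ENNReal.ofReal_pos.2 (by positivity)).ne'
  have hswap : ∫⁻ l, ∫⁻ t in Set.Ioi (0 : ℝ), ENNReal.ofReal (Real.exp (-t * l)) *
        ENNReal.ofReal ((1 + |Real.log t|) ^ (-κ)) ∂volume ∂m < ⊤ := by
    rw [lintegral_lintegral_swap (Measurable.aemeasurable (by fun_prop))]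
    refine lt_of_le_of_lt (lintegral_mono_ae ?_) hκ.lintegral_lt_top
    filter_upwards [ae_restrict_mem measurableSet_Ioi, ae_restrict_of_ae hae] with t (ht : 0 < t) hh
    rw [lintegral_mul_const _ (by fun_prop), hm t ht, ENNReal.ofReal_mul (abs_nonneg _), hh ht]
    gcongr
    exact le_abs_self _
  have hmul : c * ∫⁻ l in Set.Ioi (0 : ℝ),
      ENNReal.ofReal ((1 + |Real.log l|) ^ (-K) * l⁻¹) ∂m < ⊤ := by
    rw [← lintegral_const_mul' _ _ ENNReal.ofReal_ne_top]
    refine lt_of_le_of_lt (setLIntegral_mono' measurableSet_Ioi fun l hl => ?_)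
      ((setLIntegral_le_lintegral _ _).trans_lt hswap)
    exact le_lintegral_exp_mul_log_weight (le_max_left _ _) (le_max_right _ _) hl
  exact ENNReal.lt_top_of_mul_ne_top_right hmul.ne hc0

/-- If a real kernel `h` with `∫₀^∞ |h(t)|(1+|ln t|)^{-κ} dt < ∞` has a positive Hankel
form, then `h` is a.e. the Laplace transform of a positive measure `m` on `(0,∞)` with
`∫₀^∞ (1+|ln λ|)^{-ϰ} λ⁻¹ dm(λ) < ∞` for some `ϰ`. -/
theorem positive_hankel_laplace_representation (h : ℝ → ℝ)
    (hloc : LocallyIntegrableOn h (Set.Ioi 0))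
    (hκ : ∃ κ : ℝ, IntegrableOn
      (fun t : ℝ => |h t| * (1 + |Real.log t|) ^ (-κ)) (Set.Ioi 0))
    (hpos : ∀ f : ℝ → ℂ, IsTestFun f → 0 ≤ hankelQF (fun t : ℝ => ((h t : ℝ) : ℂ)) f) :
    ∃ m : Measure ℝ, m (Set.Iic 0) = 0 ∧
      (∃ ϰ : ℝ, ∫⁻ l in Set.Ioi (0:ℝ),
          ENNReal.ofReal ((1 + |Real.log l|) ^ (-ϰ) * l⁻¹) ∂m < ⊤) ∧
      ∀ᵐ t ∂(volume.restrict (Set.Ioi (0:ℝ))),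
        h t = ∫ l in Set.Ioi (0:ℝ), Real.exp (-t * l) ∂m := by
  obtain ⟨κ, hκ⟩ := hκ
  have hw := integrableOn_mul_inv_add_inv hloc hκ
  obtain ⟨H, hH, hae⟩ := exists_completelyMonotone_ae_eq hloc hw hpos
  obtain ⟨m, hsf, hneg, hm⟩ := hH.exists_measure
  have hzero := measure_singleton_zero_of_integrableOn hw hae hm
  have hIic : m (Set.Iic 0) = 0 := by
    rw [← Set.Iio_union_right, measure_union_null_iff]
    exact ⟨hneg, hzero⟩
  refine ⟨m, hIic, ⟨max κ 0, lintegral_log_weight_lt_top hκ hae hm⟩, ?_⟩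
  have hrestrict : m.restrict (Set.Ioi 0) = m :=
    Measure.restrict_eq_self_of_ae_mem (by
      rw [ae_iff]
      convert hIic using 2
      ext x
      simp)
  filter_upwards [ae_restrict_mem measurableSet_Ioi, ae_restrict_of_ae hae] with t ht hh
  rw [hrestrict, integral_eq_lintegral_of_nonneg_ae (ae_of_all _ fun l => (Real.exp_pos _).le)
    (Measurable.aestronglyMeasurable (by fun_prop)), hm t ht,
    ENNReal.toReal_ofReal (hH.nonneg ht), hh ht]
end
end

section
/- Let h ∈ L¹_loc((0,∞)) be real-valued and suppose there exists κ ∈ ℝ with ∫₀^∞ |h(t)| (1+|ln t|)^{-κ} dt < ∞. If Q_h[f] ≥ 0 for all f ∈ C_c^∞((0,∞)), then h agrees almost everywhere on (0,∞) with a C^∞ function h̃ that is completely monotonic, i.e. (-1)^n h̃^{(n)}(t) ≥ 0 for all t > 0 and all n = 0, 1, 2, …; moreover there exist constants C > 0 and ϰ ∈ ℝ such that h̃(t) ≤ C t^{-1} (1+|ln t|)^ϰ for all t > 0. -/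
open MeasureTheory
open scoped ComplexOrder

noncomputable section

open Filter Topology Set

/-- The kernel `u (t + s)` is positive semidefinite on `(0,∞)`. -/
def HankelPSD (u : ℝ → ℝ) : Prop :=
  ∀ (ι : Type) [Fintype ι] (c t : ι → ℝ), (∀ i, 0 < t i) →
    0 ≤ ∑ i, ∑ j, c i * c j * u (t i + t j)

namespace HankelPSD

variable {u : ℝ → ℝ}

lemma nonneg (hu : HankelPSD u) {x : ℝ} (hx : 0 < x) : 0 ≤ u x := by
  simpa using hu Unit (fun _ => 1) (fun _ => x / 2) (fun _ => by positivity)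

/-- A real sequence that is convex and `o(k)` is nonincreasing at its first step. -/
lemma _root_.le_of_convex_seq_of_sublinear {a : ℕ → ℝ}
    (hconv : ∀ k, 0 ≤ a k - 2 * a (k + 1) + a (k + 2))
    (hlim : Tendsto (fun k : ℕ => a k / k) atTop (𝓝 0)) : a 1 ≤ a 0 := by
  by_contra! hlt
  have hd : ∀ k, a 1 - a 0 ≤ a (k + 1) - a k := by
    intro k
    induction k with
    | zero => simp
    | succ k ih => linarith [hconv k]
  have hk : ∀ k : ℕ, a 0 + k * (a 1 - a 0) ≤ a k := by
    intro k
    induction k with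
    | zero => simp
    | succ k ih => push_cast; linarith [hd k]
  have h0 : Tendsto (fun k : ℕ => a 0 / (k : ℝ) + (a 1 - a 0)) atTop (𝓝 (0 + (a 1 - a 0))) :=
    (tendsto_const_div_atTop_nhds_zero_nat (a 0)).add tendsto_const_nhds
  have := le_of_tendsto_of_tendsto h0 hlim (by
    filter_upwards [eventually_gt_atTop 0] with k hk0
    have hk0' : (0 : ℝ) < k := by exact_mod_cast hk0
    rw [le_div_iff₀ hk0', add_mul, div_mul_cancel₀ _ hk0'.ne']
    linarith [hk k])
  linarith

lemma sub_shift (hu : HankelPSD u) (hlim : Tendsto (fun x => u x / x) atTop (𝓝 0))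
    {δ : ℝ} (hδ : 0 < δ) : HankelPSD (fun x => u x - u (x + δ)) := by
  intro ι _ c t ht
  have key := le_of_convex_seq_of_sublinear
    (a := fun k : ℕ => ∑ i, ∑ j, c i * c j * u (t i + t j + k * δ)) ?_ ?_
  · simp only [mul_sub, Finset.sum_sub_distrib]
    simpa using key
  · intro k
    have := hu (ι ⊕ ι) (Sum.elim c (fun i => - c i))
      (Sum.elim (fun i => t i + k * δ / 2) (fun i => t i + (k + 2) * δ / 2)) (by
        rintro (i | i)
        · have := ht i
          simp only [Sum.elim_inl]; positivity
        · have := ht i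
          simp only [Sum.elim_inr]; positivity)
    simp only [Fintype.sum_sum_type, Sum.elim_inl, Sum.elim_inr] at this
    convert this using 1
    simp only [Finset.mul_sum, ← Finset.sum_add_distrib, ← Finset.sum_sub_distrib]
    refine Finset.sum_congr rfl fun i _ => Finset.sum_congr rfl fun j _ => ?_
    push_cast
    rw [show t i + k * δ / 2 + (t j + k * δ / 2) = t i + t j + k * δ by ring,
      show t i + k * δ / 2 + (t j + (k + 2) * δ / 2) = t i + t j + (k + 1) * δ by ring,
      show t i + (k + 2) * δ / 2 + (t j + k * δ / 2) = t i + t j + (k + 1) * δ by ring,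
      show t i + (k + 2) * δ / 2 + (t j + (k + 2) * δ / 2) = t i + t j + (k + 2) * δ by ring]
    ring
  · simp only [Finset.sum_div]
    rw [show (0 : ℝ) = ∑ i : ι, ∑ j : ι, 0 by simp]
    refine tendsto_finsetSum _ fun i _ => tendsto_finsetSum _ fun j _ => ?_
    have h1 : Tendsto (fun k : ℕ => t i + t j + (k : ℝ) * δ) atTop atTop :=
      tendsto_atTop_add_const_left _ _
        (tendsto_natCast_atTop_atTop.atTop_mul_const hδ)
    have h2 : Tendsto (fun k : ℕ => (t i + t j) / (k : ℝ) + δ) atTop (𝓝 (0 + δ)) :=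
      (tendsto_const_div_atTop_nhds_zero_nat _).add tendsto_const_nhds
    have h3 := ((hlim.comp h1).mul h2).const_mul (c i * c j)
    simp only [zero_mul, mul_zero] at h3
    refine h3.congr' ?_
    filter_upwards [eventually_gt_atTop 0] with k hk0
    have hk0' : (0 : ℝ) < k := by exact_mod_cast hk0
    have : 0 < t i + t j + k * δ := by have := ht i; have := ht j; positivity
    simp only [Function.comp]
    field_simp

lemma antitoneOn (hu : HankelPSD u) (hlim : Tendsto (fun x => u x / x) atTop (𝓝 0)) :
    AntitoneOn u (Ioi 0) := by
  intro x hx y _ hxy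
  rcases hxy.eq_or_lt with rfl | hlt
  · rfl
  · have := (hu.sub_shift hlim (sub_pos.2 hlt)).nonneg hx
    simpa using this

lemma sublinear (hu : HankelPSD u) (ha : AntitoneOn u (Ioi 0)) :
    Tendsto (fun x => u x / x) atTop (𝓝 0) := by
  refine squeeze_zero' (g := fun x => u 1 / x) ?_ ?_ (tendsto_const_nhds.div_atTop tendsto_id)
  · filter_upwards [eventually_gt_atTop 0] with x hx using div_nonneg (hu.nonneg hx) hx.le
  · filter_upwards [eventually_ge_atTop 1] with x hx
    have : u x ≤ u 1 := ha (by simp) (by simp; linarith) hx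
    gcongr

lemma antitoneOn_sub_shift (hu : HankelPSD u) (ha : AntitoneOn u (Ioi 0)) {δ : ℝ} (hδ : 0 < δ) :
    AntitoneOn (fun x => u x - u (x + δ)) (Ioi 0) := by
  have hv := hu.sub_shift (hu.sublinear ha) hδ
  refine hv.antitoneOn ?_
  refine squeeze_zero' ?_ ?_ (hu.sublinear ha)
  · filter_upwards [eventually_gt_atTop 0] with x hx using div_nonneg (hv.nonneg hx) hx.le
  · filter_upwards [eventually_gt_atTop 0] with x hx
    have : 0 ≤ u (x + δ) := hu.nonneg (by positivity)
    gcongr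
    linarith

lemma const_mul (hu : HankelPSD u) {r : ℝ} (hr : 0 ≤ r) : HankelPSD (fun x => r * u x) := by
  intro ι _ c t ht
  have := mul_nonneg hr (hu ι c t ht)
  simp only [Finset.mul_sum] at this
  refine this.trans_eq (Finset.sum_congr rfl fun i _ => Finset.sum_congr rfl fun j _ => ?_)
  ring

/-- Pointwise limits along an ultrafilter of bounded, nonincreasing kernels. -/
lemma exists_ultrafilter_limit {U : ℕ → ℝ → ℝ} (F : Ultrafilter ℕ)
    (hU : ∀ n, HankelPSD (U n)) (ha : ∀ n, AntitoneOn (U n) (Ioi 0))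
    (hbdd : ∀ x, 0 < x → ∃ M, ∀ᶠ n in (F : Filter ℕ), U n x ≤ M) :
    ∃ g : ℝ → ℝ, HankelPSD g ∧ AntitoneOn g (Ioi 0) ∧
      ∀ x, 0 < x → Tendsto (fun n => U n x) F (𝓝 (g x)) := by
  have hex : ∀ x, ∃ y, 0 < x → Tendsto (fun n => U n x) F (𝓝 y) := by
    intro x
    by_cases hx : 0 < x
    · obtain ⟨M, hM⟩ := hbdd x hx
      obtain ⟨y, -, hy⟩ := (isCompact_Icc (a := 0) (b := M)).ultrafilter_le_nhds
        (F.map fun n => U n x) (by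
          rw [le_principal_iff]
          change ∀ᶠ n in (F : Filter ℕ), U n x ∈ Icc 0 M
          filter_upwards [hM] with n hn using ⟨(hU n).nonneg hx, hn⟩)
      exact ⟨y, fun _ => hy⟩
    · exact ⟨0, fun h => absurd h hx⟩
  choose g hg using hex
  refine ⟨g, ?_, ?_, hg⟩
  · intro ι _ c t ht
    refine ge_of_tendsto (x := (F : Filter ℕ))
      (f := fun n => ∑ i, ∑ j, c i * c j * U n (t i + t j)) ?_ ?_
    · exact tendsto_finsetSum _ fun i _ => tendsto_finsetSum _ fun j _ =>
        (hg _ (add_pos (ht i) (ht j))).const_mul _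
    · exact Eventually.of_forall fun n => hU n ι c t ht
  · intro x hx y hy hxy
    exact le_of_tendsto_of_tendsto' (hg y hy) (hg x hx) fun n => ha n hx hy hxy

/-- Telescoping bounds for a kernel whose `δ`-differences are nonincreasing. -/
lemma nat_mul_sub_le (hu : HankelPSD u) (ha : AntitoneOn u (Ioi 0)) {x δ : ℝ} (hx : 0 < x)
    (hδ : 0 < δ) (m : ℕ) :
    m * (u (x + m * δ) - u (x + m * δ + δ)) ≤ u x - u (x + m * δ) ∧
      u x - u (x + m * δ) ≤ m * (u x - u (x + δ)) := by
  have hD := hu.antitoneOn_sub_shift ha hδ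
  induction m with
  | zero => simp
  | succ m ih =>
    have hm : 0 < x + m * δ := by positivity
    have e : x + ((m + 1 : ℕ) : ℝ) * δ = x + m * δ + δ := by push_cast; ring
    rw [e]
    have h1 := hD (mem_Ioi.2 hm) (mem_Ioi.2 (by positivity : 0 < x + m * δ + δ))
      (by linarith)
    have h2 := hD (mem_Ioi.2 hx) (mem_Ioi.2 hm) (by have : 0 ≤ m * δ := by positivity
                                                    linarith)
    simp only at h1 h2
    push_cast
    constructor
    · have := mul_le_mul_of_nonneg_left h1 (Nat.cast_nonneg m)
      linarith [ih.1]
    · linarith [ih.2]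

/-- A nonincreasing positive semidefinite kernel has minus a derivative, in the sense of two-sided
difference bounds, which is again a nonincreasing positive semidefinite kernel. -/
lemma exists_slope (hu : HankelPSD u) (ha : AntitoneOn u (Ioi 0)) :
    ∃ v : ℝ → ℝ, HankelPSD v ∧ AntitoneOn v (Ioi 0) ∧ ∀ x δ, 0 < x → 0 < δ →
      δ * v (x + δ) ≤ u x - u (x + δ) ∧ u x - u (x + δ) ≤ δ * v x := by
  set F : Ultrafilter ℕ := hyperfilter ℕ
  have hF : (F : Filter ℕ) ≤ atTop := Nat.hyperfilter_le_atTop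
  have hn : ∀ n : ℕ, (0 : ℝ) < 1 / ((n : ℝ) + 1) := fun n => by positivity
  set D : ℕ → ℝ → ℝ := fun n x => ((n : ℝ) + 1) * (u x - u (x + 1 / ((n : ℝ) + 1))) with hDdef
  have hDpsd : ∀ n, HankelPSD (D n) := fun n =>
    (hu.sub_shift (hu.sublinear ha) (hn n)).const_mul (by positivity)
  have hDa : ∀ n, AntitoneOn (D n) (Ioi 0) := fun n x hx y hy hxy =>
    mul_le_mul_of_nonneg_left (hu.antitoneOn_sub_shift ha (hn n) hx hy hxy) (by positivity)
  have hlow : ∀ (n m : ℕ) x, 0 < x → (m / ((n : ℝ) + 1)) * D n (x + m / ((n : ℝ) + 1)) ≤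
      u x - u (x + m / ((n : ℝ) + 1)) := by
    intro n m x hx
    have := (hu.nat_mul_sub_le ha hx (hn n) m).1
    rw [mul_one_div] at this
    refine le_of_eq_of_le ?_ this
    simp only [hDdef]
    field_simp
  have hup : ∀ (n m : ℕ) x, 0 < x →
      u x - u (x + m / ((n : ℝ) + 1)) ≤ (m / ((n : ℝ) + 1)) * D n x := by
    intro n m x hx
    have := (hu.nat_mul_sub_le ha hx (hn n) m).2
    rw [mul_one_div] at this
    refine this.trans_eq ?_
    simp only [hDdef]
    field_simp
  have hfl : ∀ δ : ℝ, 0 < δ →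
      Tendsto (fun n : ℕ => (⌊δ * ((n : ℝ) + 1)⌋₊ : ℝ) / ((n : ℝ) + 1)) F (𝓝 δ) := by
    intro δ hδ
    refine Tendsto.mono_left ?_ hF
    have := (tendsto_nat_floor_mul_div_atTop hδ.le).comp
      (tendsto_atTop_add_const_right _ (1 : ℝ) tendsto_natCast_atTop_atTop)
    exact this
  have hce : ∀ δ : ℝ, 0 < δ →
      Tendsto (fun n : ℕ => (⌈δ * ((n : ℝ) + 1)⌉₊ : ℝ) / ((n : ℝ) + 1)) F (𝓝 δ) := by
    intro δ hδ
    refine Tendsto.mono_left ?_ hF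
    have := (tendsto_nat_ceil_mul_div_atTop hδ.le).comp
      (tendsto_atTop_add_const_right _ (1 : ℝ) tendsto_natCast_atTop_atTop)
    exact this
  have hlow' : ∀ (n : ℕ) x δ, 0 < x → 0 < δ →
      (⌊δ * ((n : ℝ) + 1)⌋₊ : ℝ) / ((n : ℝ) + 1) * D n (x + δ) ≤ u x - u (x + δ) := by
    intro n x δ hx hδ
    have hp : (0 : ℝ) < n + 1 := by positivity
    have hle : (⌊δ * ((n : ℝ) + 1)⌋₊ : ℝ) / ((n : ℝ) + 1) ≤ δ := by
      rw [div_le_iff₀ hp]; exact Nat.floor_le (by positivity)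
    have hpos : 0 ≤ (⌊δ * ((n : ℝ) + 1)⌋₊ : ℝ) / ((n : ℝ) + 1) := by positivity
    have h1 := hlow n ⌊δ * ((n : ℝ) + 1)⌋₊ x hx
    set q := (⌊δ * ((n : ℝ) + 1)⌋₊ : ℝ) / ((n : ℝ) + 1)
    have hxq : x + q ∈ Ioi (0 : ℝ) := mem_Ioi.2 (by linarith)
    have hxd : x + δ ∈ Ioi (0 : ℝ) := mem_Ioi.2 (by linarith)
    have h2 : u (x + δ) ≤ u (x + q) := ha hxq hxd (by linarith)
    have h3 : D n (x + δ) ≤ D n (x + q) := hDa n hxq hxd (by linarith)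
    have := mul_le_mul_of_nonneg_left h3 hpos
    linarith
  have hup' : ∀ (n : ℕ) x δ, 0 < x → 0 < δ →
      u x - u (x + δ) ≤ (⌈δ * ((n : ℝ) + 1)⌉₊ : ℝ) / ((n : ℝ) + 1) * D n x := by
    intro n x δ hx hδ
    have hp : (0 : ℝ) < n + 1 := by positivity
    have hle : δ ≤ (⌈δ * ((n : ℝ) + 1)⌉₊ : ℝ) / ((n : ℝ) + 1) := by
      rw [le_div_iff₀ hp]; exact Nat.le_ceil _
    have h1 := hup n ⌈δ * ((n : ℝ) + 1)⌉₊ x hx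
    set q := (⌈δ * ((n : ℝ) + 1)⌉₊ : ℝ) / ((n : ℝ) + 1)
    have h2 : u (x + q) ≤ u (x + δ) :=
      ha (mem_Ioi.2 (by linarith)) (mem_Ioi.2 (by linarith)) (by linarith)
    linarith
  have hbdd : ∀ x, 0 < x → ∃ M, ∀ᶠ n in (F : Filter ℕ), D n x ≤ M := by
    intro x hx
    refine ⟨u (x / 2) / (x / 4), ?_⟩
    filter_upwards [(hfl (x / 2) (by positivity)).eventually
      (lt_mem_nhds (show x / 4 < x / 2 by linarith))] with n hq
    have h1 := hlow' n (x / 2) (x / 2) (by positivity) (by positivity)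
    rw [add_halves] at h1
    have h2 := (hDpsd n).nonneg hx
    have h3 := hu.nonneg hx
    rw [le_div_iff₀ (by positivity)]
    have := mul_le_mul_of_nonneg_right hq.le h2
    linarith
  obtain ⟨v, hv, hva, hlim⟩ := exists_ultrafilter_limit F hDpsd hDa hbdd
  refine ⟨v, hv, hva, fun x δ hx hδ => ⟨?_, ?_⟩⟩
  · exact le_of_tendsto' ((hfl δ hδ).mul (hlim (x + δ) (by positivity)))
      fun n => hlow' n x δ hx hδ
  · exact ge_of_tendsto' ((hce δ hδ).mul (hlim x hx)) fun n => hup' n x δ hx hδ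

lemma continuousOn (hu : HankelPSD u) (ha : AntitoneOn u (Ioi 0)) : ContinuousOn u (Ioi 0) := by
  obtain ⟨v, hv, hva, hvu⟩ := hu.exists_slope ha
  intro x hx
  have hx0 : (0 : ℝ) < x := hx
  have hL : ∀ y ∈ Ioi (x / 2), |u y - u x| ≤ v (x / 2) * |y - x| := by
    intro y hy
    have hy0 : x / 2 < y := hy
    have hhalf : (x / 2) ∈ Ioi (0 : ℝ) := mem_Ioi.2 (by linarith)
    rcases lt_trichotomy y x with h | rfl | h
    · have h1 := (hvu y (x - y) (by linarith) (by linarith)).2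
      rw [add_sub_cancel] at h1
      have h2 : v y ≤ v (x / 2) := hva hhalf (mem_Ioi.2 (by linarith)) hy0.le
      have h3 : u x ≤ u y := ha (mem_Ioi.2 (by linarith)) hx h.le
      rw [abs_of_nonneg (by linarith), abs_of_neg (by linarith)]
      nlinarith
    · simp
    · have h1 := (hvu x (y - x) hx0 (by linarith)).2
      rw [add_sub_cancel] at h1
      have h2 : v x ≤ v (x / 2) := hva hhalf hx (by linarith)
      have h3 : u y ≤ u x := ha hx (mem_Ioi.2 (by linarith)) h.le
      rw [abs_of_nonpos (by linarith), abs_of_pos (by linarith)]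
      nlinarith
  refine ContinuousAt.continuousWithinAt ?_
  rw [ContinuousAt, tendsto_iff_norm_sub_tendsto_zero]
  refine squeeze_zero' (Eventually.of_forall fun _ => norm_nonneg _)
    (g := fun y => v (x / 2) * |y - x|) ?_ ?_
  · filter_upwards [lt_mem_nhds (show x / 2 < x by linarith)] with y hy using hL y hy
  · have : Continuous fun y => v (x / 2) * |y - x| := by fun_prop
    simpa using this.tendsto x

lemma exists_hasDerivAt (hu : HankelPSD u) (ha : AntitoneOn u (Ioi 0)) :
    ∃ v : ℝ → ℝ, HankelPSD v ∧ AntitoneOn v (Ioi 0) ∧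
      ∀ x, 0 < x → HasDerivAt u (-v x) x := by
  obtain ⟨v, hv, hva, hvu⟩ := hu.exists_slope ha
  refine ⟨v, hv, hva, fun x hx => ?_⟩
  have hcv : ContinuousAt v x := (hv.continuousOn hva).continuousAt (Ioi_mem_nhds hx)
  rw [hasDerivAt_iff_tendsto]
  refine squeeze_zero' (g := fun y => |v y - v x|) ?_ ?_ ?_
  · exact Eventually.of_forall fun y => by positivity
  · filter_upwards [lt_mem_nhds hx] with y hy
    rw [← div_eq_inv_mul]
    refine div_le_of_le_mul₀ (norm_nonneg _) (abs_nonneg _) ?_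
    simp only [smul_eq_mul, Real.norm_eq_abs]
    rcases lt_trichotomy y x with h | rfl | h
    · obtain ⟨h1, h2⟩ := hvu y (x - y) hy (by linarith)
      rw [add_sub_cancel] at h1 h2
      have h3 : v x ≤ v y := hva hy hx h.le
      rw [abs_of_nonneg (by linarith : 0 ≤ v y - v x), abs_of_neg (by linarith : y - x < 0),
        abs_le]
      constructor <;> nlinarith
    · simp
    · obtain ⟨h1, h2⟩ := hvu x (y - x) hx (by linarith)
      rw [add_sub_cancel] at h1 h2
      have h3 : v y ≤ v x := hva hx hy h.le
      rw [abs_of_nonpos (by linarith : v y - v x ≤ 0), abs_of_pos (by linarith : 0 < y - x),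
        abs_le]
      constructor <;> nlinarith
  · have := (hcv.sub_const (v x)).abs
    simpa [ContinuousAt] using this

/-- A nonincreasing positive semidefinite kernel is completely monotonic. -/
lemma completelyMonotone (hu : HankelPSD u) (ha : AntitoneOn u (Ioi 0)) :
    ContDiffOn ℝ (⊤ : ℕ∞) u (Ioi 0) ∧ ∀ n : ℕ, ∀ t : ℝ, 0 < t →
      0 ≤ (-1 : ℝ) ^ n * iteratedDerivWithin n u (Ioi 0) t := by
  have main : ∀ n : ℕ, ∃ v : ℝ → ℝ, HankelPSD v ∧ AntitoneOn v (Ioi 0) ∧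
      ∀ x ∈ Ioi (0 : ℝ), iteratedDerivWithin n u (Ioi 0) x = (-1 : ℝ) ^ n * v x := by
    intro n
    induction n with
    | zero => exact ⟨u, hu, ha, fun x _ => by simp⟩
    | succ n ih =>
      obtain ⟨v, hv, hva, hvu⟩ := ih
      obtain ⟨w, hw, hwa, hwv⟩ := hv.exists_hasDerivAt hva
      refine ⟨w, hw, hwa, fun x hx => ?_⟩
      rw [iteratedDerivWithin_succ, derivWithin_congr hvu (hvu x hx),
        (((hwv x hx).const_mul _).hasDerivWithinAt).derivWithin (uniqueDiffOn_Ioi 0 x hx)]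
      ring
  constructor
  · refine contDiffOn_of_differentiableOn_deriv fun m _ => ?_
    obtain ⟨v, hv, hva, hvu⟩ := main m
    obtain ⟨w, -, -, hwv⟩ := hv.exists_hasDerivAt hva
    refine DifferentiableOn.congr (f := fun x => (-1 : ℝ) ^ m * v x) ?_ hvu
    exact fun x hx => ((hwv x hx).const_mul _).differentiableAt.differentiableWithinAt
  · intro n t ht
    obtain ⟨v, hv, -, hvu⟩ := main n
    rw [hvu t ht, ← mul_assoc, ← pow_add, ← two_mul, pow_mul]
    simpa using hv.nonneg ht

end HankelPSD

/-- The kernel `k` averaged twice against `φ`. -/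
def hankelMollify (k φ : ℝ → ℝ) (x : ℝ) : ℝ :=
  ∫ t, (∫ s, k (x + t + s) * φ s) * φ t

section Mollify

variable {k φ : ℝ → ℝ}

lemma _root_.MeasureTheory.LocallyIntegrable.comp_const_add (hk : LocallyIntegrable k) (z : ℝ) :
    LocallyIntegrable (fun s => k (z + s)) := by
  rw [locallyIntegrable_iff] at hk ⊢
  intro K hK
  have h1 := hk ((fun s => z + s) '' K) (hK.image (by fun_prop))
  have := (measurePreserving_add_left volume z).integrableOn_image
    (measurableEmbedding_addLeft z) (f := k) (s := K)
  exact this.1 h1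

lemma integrable_shift_mul (hk : LocallyIntegrable k) (hφ : Continuous φ)
    (hφs : HasCompactSupport φ) (z : ℝ) : Integrable (fun s => k (z + s) * φ s) :=
  (hk.comp_const_add z).integrable_smul_right_of_hasCompactSupport hφ hφs

lemma continuous_integral_shift_mul (hk : LocallyIntegrable k) (hφ : Continuous φ)
    (hφs : HasCompactSupport φ) : Continuous (fun z => ∫ s, k (z + s) * φ s) := by
  have hg : HasCompactSupport (fun y => φ (-y)) := hφs.comp_homeomorph (Homeomorph.neg ℝ)
  have := hg.continuous_convolution_right (ContinuousLinearMap.mul ℝ ℝ) (μ := volume) hk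
    (by fun_prop)
  convert this using 2 with z
  rw [convolution_def,
    ← integral_add_left_eq_self (fun t => ContinuousLinearMap.mul ℝ ℝ (k t) (φ (-(z - t)))) z]
  simp

lemma integrable_integral_shift_mul_mul (hk : LocallyIntegrable k) (hφ : Continuous φ)
    (hφs : HasCompactSupport φ) {ψ : ℝ → ℝ} (hψ : Continuous ψ) (hψs : HasCompactSupport ψ)
    (x : ℝ) : Integrable (fun t => (∫ s, k (x + t + s) * φ s) * ψ t) :=
  Continuous.integrable_of_hasCompactSupport
    (((continuous_integral_shift_mul hk hφ hφs).comp (continuous_const.add continuous_id)).mul hψ)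
    hψs.mul_left

lemma integral_shift_mul_shift (a z : ℝ) :
    ∫ s, k (z + s) * φ (s - a) = ∫ s, k (z + a + s) * φ s := by
  rw [← integral_add_right_eq_self _ a]
  refine integral_congr_ae (Eventually.of_forall fun s => ?_)
  simp only [add_sub_cancel_right]
  rw [show z + (s + a) = z + a + s by ring]

lemma hasCompactSupport_comp_sub (hφs : HasCompactSupport φ) (a : ℝ) :
    HasCompactSupport (fun s => φ (s - a)) :=
  hφs.comp_homeomorph (Homeomorph.subRight a)

lemma integral_hankel_sum_shift (hk : LocallyIntegrable k) (hφ : Continuous φ)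
    (hφs : HasCompactSupport φ) {ι : Type} [Fintype ι] (c a : ι → ℝ) :
    ∫ t, ∫ s, k (t + s) * (∑ i, c i * φ (s - a i)) * (∑ j, c j * φ (t - a j)) =
      ∑ i, ∑ j, c i * c j * hankelMollify k φ (a i + a j) := by
  have hφa : ∀ i, Continuous (fun s => φ (s - a i)) := fun i => by fun_prop
  have hφsa : ∀ i, HasCompactSupport (fun s => φ (s - a i)) := fun i =>
    hasCompactSupport_comp_sub hφs (a i)
  have inner : ∀ t, ∫ s, k (t + s) * (∑ i, c i * φ (s - a i)) * (∑ j, c j * φ (t - a j)) =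
      ∑ i, ∑ j, c i * c j * ((∫ s, k (a i + t + s) * φ s) * φ (t - a j)) := by
    intro t
    rw [integral_mul_const]
    have : ∫ s, k (t + s) * (∑ i, c i * φ (s - a i)) =
        ∑ i, c i * ∫ s, k (a i + t + s) * φ s := by
      simp only [Finset.mul_sum]
      rw [integral_finsetSum]
      · refine Finset.sum_congr rfl fun i _ => ?_
        rw [add_comm (a i) t, ← integral_shift_mul_shift, ← integral_const_mul]
        congr 1 with s
        ring
      · intro i _
        refine ((integrable_shift_mul hk (hφa i) (hφsa i) t).const_mul (c i)).congr
          (Eventually.of_forall fun s => ?_)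
        simp only
        ring
    rw [this, Finset.sum_mul_sum]
    refine Finset.sum_congr rfl fun i _ => Finset.sum_congr rfl fun j _ => ?_
    ring
  simp only [inner]
  have hφint : ∀ i j, Integrable
      (fun t => c i * c j * ((∫ s, k (a i + t + s) * φ s) * φ (t - a j))) := fun i j =>
    (integrable_integral_shift_mul_mul hk hφ hφs (hφa j) (hφsa j) (a i)).const_mul _
  rw [integral_finsetSum _ fun i _ => integrable_finsetSum _ fun j _ => hφint i j]
  refine Finset.sum_congr rfl fun i _ => ?_
  rw [integral_finsetSum _ fun j _ => hφint i j]
  refine Finset.sum_congr rfl fun j _ => ?_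
  rw [integral_const_mul]
  congr 1
  exact integral_shift_mul_shift (k := fun y => ∫ s, k (y + s) * φ s) (a j) (a i)

lemma abs_hankelMollify_le (hk : LocallyIntegrable k) (hφ : Continuous φ)
    (hφs : HasCompactSupport φ) (hφ0 : ∀ s, 0 ≤ φ s) {B R : ℝ} (hB : ∀ s, φ s ≤ B)
    (hsupp : ∀ s, φ s ≠ 0 → s ∈ Icc 0 R) (hφint : ∫ s, φ s = 1) (x : ℝ) :
    |hankelMollify k φ x| ≤ B * ∫ y in Icc x (x + 2 * R), |k y| := by
  have hB0 : 0 ≤ B := (hφ0 0).trans (hB 0)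
  have hIoc : IntegrableOn (fun y => |k y|) (Icc x (x + 2 * R)) :=
    (hk.integrableOn_isCompact isCompact_Icc).abs
  have inner : ∀ t ∈ Icc 0 R, |∫ s, k (x + t + s) * φ s| ≤
      B * ∫ y in Icc x (x + 2 * R), |k y| := by
    intro t ht
    calc |∫ s, k (x + t + s) * φ s| ≤ ∫ s, |k (x + t + s) * φ s| := abs_integral_le_integral_abs
      _ ≤ ∫ s, B * (Icc x (x + 2 * R)).indicator (fun y => |k y|) (x + t + s) := by
          refine integral_mono (integrable_shift_mul hk hφ hφs _).abs ?_ ?_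
          · exact ((integrable_indicator_iff measurableSet_Icc).2 hIoc).comp_add_left (x + t)
              |>.const_mul B
          · intro s
            simp only
            by_cases hs : φ s = 0
            · simp only [hs, mul_zero, abs_zero]
              exact mul_nonneg hB0 (indicator_nonneg (fun _ _ => abs_nonneg _) _)
            · have hs' := hsupp s hs
              have hmem : x + t + s ∈ Icc x (x + 2 * R) :=
                ⟨by linarith [ht.1, hs'.1], by linarith [ht.2, hs'.2]⟩
              rw [indicator_of_mem hmem,
                abs_mul, abs_of_nonneg (hφ0 s), mul_comm]
              exact mul_le_mul_of_nonneg_right (hB s) (abs_nonneg _)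
      _ = B * ∫ y in Icc x (x + 2 * R), |k y| := by
          rw [integral_const_mul,
            integral_add_left_eq_self ((Icc x (x + 2 * R)).indicator (fun y => |k y|)) (x + t),
            integral_indicator measurableSet_Icc]
  calc |hankelMollify k φ x| ≤ ∫ t, |(∫ s, k (x + t + s) * φ s) * φ t| :=
        abs_integral_le_integral_abs
    _ ≤ ∫ t, (B * ∫ y in Icc x (x + 2 * R), |k y|) * φ t := by
        refine integral_mono (integrable_integral_shift_mul_mul hk hφ hφs hφ hφs x).abs
          ((hφ.integrable_of_hasCompactSupport hφs).const_mul _) ?_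
        intro t
        simp only
        by_cases ht : φ t = 0
        · simp [ht]
        · rw [abs_mul, abs_of_nonneg (hφ0 t)]
          exact mul_le_mul_of_nonneg_right (inner t (hsupp t ht)) (hφ0 t)
    _ = _ := by rw [integral_const_mul, hφint, mul_one]

lemma hankelMollify_sub_const (hk : LocallyIntegrable k) (hφ : Continuous φ)
    (hφs : HasCompactSupport φ) (hφint : ∫ s, φ s = 1) (r x : ℝ) :
    hankelMollify (fun y => k y - r) φ x = hankelMollify k φ x - r := by
  have hφi := hφ.integrable_of_hasCompactSupport (μ := volume) hφs
  have inner : ∀ z, ∫ s, (k (z + s) - r) * φ s = (∫ s, k (z + s) * φ s) - r := by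
    intro z
    simp only [sub_mul]
    rw [integral_sub (integrable_shift_mul hk hφ hφs z) (hφi.const_mul r), integral_const_mul,
      hφint, mul_one]
  simp only [hankelMollify, inner]
  simp only [sub_mul]
  rw [integral_sub (integrable_integral_shift_mul_mul hk hφ hφs hφ hφs x) (hφi.const_mul r),
    integral_const_mul, hφint, mul_one]

lemma hankelMollify_congr {k' : ℝ → ℝ} {x : ℝ}
    (h : ∀ s t, φ s ≠ 0 → φ t ≠ 0 → k (x + t + s) = k' (x + t + s)) :
    hankelMollify k φ x = hankelMollify k' φ x := by
  refine integral_congr_ae (Eventually.of_forall fun t => ?_)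
  simp only
  by_cases ht : φ t = 0
  · simp [ht]
  · congr 1
    refine integral_congr_ae (Eventually.of_forall fun s => ?_)
    simp only
    by_cases hs : φ s = 0
    · simp [hs]
    · rw [h s t hs ht]

end Mollify

lemma locallyIntegrable_indicator_Ici {h : ℝ → ℝ} (hloc : LocallyIntegrableOn h (Ioi 0)) {a : ℝ}
    (ha : 0 < a) : LocallyIntegrable ((Ici a).indicator h) := by
  rw [locallyIntegrable_iff]
  intro K hK
  rw [IntegrableOn, integrable_indicator_iff measurableSet_Ici, IntegrableOn,
    Measure.restrict_restrict measurableSet_Ici]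
  exact hloc.integrableOn_compact_subset (fun y hy => mem_Ioi.2 (ha.trans_le hy.1))
    (hK.inter_left isClosed_Ici)

lemma hankelPSD_hankelMollify {h φ : ℝ → ℝ} (hloc : LocallyIntegrableOn h (Ioi 0))
    (hpos : ∀ f : ℝ → ℂ, IsTestFun f → 0 ≤ hankelQF (fun t : ℝ => ((h t : ℝ) : ℂ)) f)
    (hφ : ContDiff ℝ (⊤ : ℕ∞) φ) (hφs : HasCompactSupport φ) {a : ℝ} (ha : 0 < a)
    (hsupp : ∀ s, φ s ≠ 0 → a ≤ s) :
    HankelPSD (hankelMollify ((Ici a).indicator h) φ) := by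
  intro ι _ c t ht
  rw [← integral_hankel_sum_shift (locallyIntegrable_indicator_Ici hloc ha) hφ.continuous hφs]
  set f : ℝ → ℝ := fun s => ∑ i, c i * φ (s - t i) with hf
  have hf0 : ∀ s, s < a → f s = 0 := by
    intro s hs
    refine Finset.sum_eq_zero fun i _ => ?_
    by_contra hne
    have := hsupp _ (right_ne_zero_of_mul hne)
    linarith [ht i]
  have hfs : HasCompactSupport f := by
    have : f = ∑ i, fun s => c i * φ (s - t i) := by ext s; simp [hf]
    rw [this]
    exact HasCompactSupport.finset_sum fun i _ => (hasCompactSupport_comp_sub hφs (t i)).mul_left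
  have htest : IsTestFun (fun s => (f s : ℂ)) := by
    refine ⟨?_, ?_, ?_⟩
    · have : ContDiff ℝ (⊤ : ℕ∞) f := by
        refine ContDiff.sum fun i _ => ?_
        exact contDiff_const.mul (hφ.comp (contDiff_id.sub contDiff_const))
      exact Complex.ofRealCLM.contDiff.comp this
    · exact hfs.comp_left (g := fun x : ℝ => (x : ℂ)) (by simp)
    · have : tsupport (fun s => (f s : ℂ)) ⊆ Ici a := by
        refine closure_minimal (fun s hs => ?_) isClosed_Ici
        by_contra hlt
        exact hs (by simp [hf0 s (not_le.1 hlt)])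
      exact this.trans fun s hs => mem_Ioi.2 (ha.trans_le hs)
  have key := hpos _ htest
  have heq : hankelQF (fun t : ℝ => ((h t : ℝ) : ℂ)) (fun s => (f s : ℂ)) =
      ((∫ t, ∫ s, (Ici a).indicator h (t + s) * f s * f t : ℝ) : ℂ) := by
    rw [hankelQF, ← integral_complex_ofReal,
      setIntegral_eq_integral_of_forall_compl_eq_zero]
    · refine integral_congr_ae (Eventually.of_forall fun t => ?_)
      simp only
      rw [← integral_complex_ofReal, setIntegral_eq_integral_of_forall_compl_eq_zero]
      · refine integral_congr_ae (Eventually.of_forall fun s => ?_)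
        simp only [Complex.conj_ofReal, ← Complex.ofReal_mul]
        congr 1
        by_cases hs : s < a
        · simp [hf0 s hs]
        by_cases ht : t < a
        · simp [hf0 t ht]
        rw [indicator_of_mem (mem_Ici.2 (by linarith))]
      · intro s hs
        rw [hf0 s ((not_lt.1 hs).trans_lt ha)]
        simp
    · intro t ht
      rw [hf0 t ((not_lt.1 ht).trans_lt ha)]
      simp
  rw [heq, Complex.zero_le_real] at key
  exact key

lemma eventually_one_add_abs_log_rpow_le_sqrt (κ : ℝ) :
    ∀ᶠ y : ℝ in atTop, (1 + |Real.log y|) ^ κ ≤ √y := by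
  have h1 := (isLittleO_log_rpow_rpow_atTop κ (by norm_num : (0 : ℝ) < 1 / 2)).bound
    (by norm_num : (0 : ℝ) < 1 / 2)
  have h2 : Tendsto (fun y : ℝ => Real.exp 1 * y) atTop atTop :=
    tendsto_id.const_mul_atTop (Real.exp_pos 1)
  filter_upwards [h2.eventually h1, eventually_ge_atTop 1] with y hy hy1
  have hlog : 0 ≤ Real.log y := Real.log_nonneg hy1
  have e : Real.log (Real.exp 1 * y) = 1 + |Real.log y| := by
    rw [Real.log_mul (Real.exp_pos 1).ne' (by linarith), Real.log_exp, abs_of_nonneg hlog]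
  rw [e, ← Real.sqrt_eq_rpow, Real.norm_of_nonneg (by positivity),
    Real.norm_of_nonneg (by positivity), Real.sqrt_mul (Real.exp_pos 1).le] at hy
  have h4 : √(Real.exp 1) ≤ 2 := by
    rw [Real.sqrt_le_left (by norm_num)]
    linarith [Real.exp_one_lt_d9]
  nlinarith [Real.sqrt_nonneg y]

lemma setIntegral_Icc_abs_le {h : ℝ → ℝ} (hloc : LocallyIntegrableOn h (Ioi 0)) {κ : ℝ}
    (hκ : IntegrableOn (fun t : ℝ => |h t| * (1 + |Real.log t|) ^ (-κ)) (Ioi 0))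
    {a b M : ℝ} (ha : 0 < a) (hM : ∀ y ∈ Icc a b, (1 + |Real.log y|) ^ κ ≤ M) (hM0 : 0 ≤ M) :
    ∫ y in Icc a b, |h y| ≤
      M * ∫ y in Ioi (0 : ℝ), |h y| * (1 + |Real.log y|) ^ (-κ) := by
  have hsub : Icc a b ⊆ Ioi 0 := fun y hy => mem_Ioi.2 (ha.trans_le hy.1)
  calc ∫ y in Icc a b, |h y|
      ≤ ∫ y in Icc a b, M * (|h y| * (1 + |Real.log y|) ^ (-κ)) := by
        refine setIntegral_mono_on (hloc.integrableOn_compact_subset hsub isCompact_Icc).abs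
          ((hκ.mono_set hsub).const_mul M) measurableSet_Icc fun y hy => ?_
        have hp : 0 < (1 + |Real.log y|) ^ κ := by positivity
        rw [Real.rpow_neg (by positivity), mul_left_comm, ← div_eq_mul_inv]
        exact le_mul_of_one_le_right (abs_nonneg _) ((one_le_div hp).2 (hM y hy))
    _ = M * ∫ y in Icc a b, |h y| * (1 + |Real.log y|) ^ (-κ) := integral_const_mul _ _
    _ ≤ _ := by
        refine mul_le_mul_of_nonneg_left (setIntegral_mono_set hκ ?_ hsub.eventuallyLE) hM0
        exact Eventually.of_forall fun y => by positivity

lemma sublinear_hankelMollify {h φ : ℝ → ℝ} (hloc : LocallyIntegrableOn h (Ioi 0)) {κ : ℝ}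
    (hκ : IntegrableOn (fun t : ℝ => |h t| * (1 + |Real.log t|) ^ (-κ)) (Ioi 0))
    (hφ : Continuous φ) (hφs : HasCompactSupport φ) (hφ0 : ∀ s, 0 ≤ φ s) {B R : ℝ}
    (hB : ∀ s, φ s ≤ B) (hsupp : ∀ s, φ s ≠ 0 → s ∈ Icc 0 R) (hφint : ∫ s, φ s = 1)
    {a : ℝ} (ha : 0 < a) :
    Tendsto (fun x => hankelMollify ((Ici a).indicator h) φ x / x) atTop (𝓝 0) := by
  obtain ⟨X, hX⟩ := eventually_atTop.1 (eventually_one_add_abs_log_rpow_le_sqrt κ)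
  set I := ∫ y in Ioi (0 : ℝ), |h y| * (1 + |Real.log y|) ^ (-κ)
  have hB0 : 0 ≤ B := (hφ0 0).trans (hB 0)
  refine squeeze_zero_norm' (a := fun x => B * I * √2 / √x) ?_
    (tendsto_const_nhds.div_atTop Real.tendsto_sqrt_atTop)
  filter_upwards [eventually_ge_atTop X, eventually_ge_atTop a, eventually_ge_atTop (2 * R)]
    with x hxX hxa hxR
  have hx : 0 < x := ha.trans_le hxa
  have h1 := abs_hankelMollify_le (locallyIntegrable_indicator_Ici hloc ha) hφ hφs hφ0 hB hsupp
    hφint x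
  have h2 : ∫ y in Icc x (x + 2 * R), |(Ici a).indicator h y| =
      ∫ y in Icc x (x + 2 * R), |h y| :=
    setIntegral_congr_fun measurableSet_Icc fun y hy => by
      rw [indicator_of_mem (mem_Ici.2 (hxa.trans hy.1))]
  have h3 : ∫ y in Icc x (x + 2 * R), |h y| ≤ √(2 * x) * I :=
    setIntegral_Icc_abs_le hloc hκ hx (fun y hy => (hX y (hxX.trans hy.1)).trans
      (Real.sqrt_le_sqrt (by linarith [hy.2]))) (Real.sqrt_nonneg _)
  rw [h2] at h1
  rw [norm_div, Real.norm_eq_abs, Real.norm_of_nonneg hx.le, div_le_div_iff₀ hx (by positivity)]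
  have h4 := h1.trans (mul_le_mul_of_nonneg_left h3 hB0)
  rw [Real.sqrt_mul (by norm_num)] at h4
  calc _ ≤ B * (√2 * √x * I) * √x := mul_le_mul_of_nonneg_right h4 (Real.sqrt_nonneg _)
    _ = B * I * √2 * (√x * √x) := by ring
    _ = _ := by rw [Real.mul_self_sqrt hx.le]

/-- A bump function supported in `[ε, 5ε]`. -/
def shiftedBump (ε : ℝ) (hε : 0 < ε) : ContDiffBump (3 * ε) where
  rIn := ε
  rOut := 2 * ε
  rIn_pos := hε
  rIn_lt_rOut := by linarith

lemma mem_Icc_of_shiftedBump_ne_zero {ε : ℝ} (hε : 0 < ε) {s : ℝ}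
    (hs : (shiftedBump ε hε).normed volume s ≠ 0) : s ∈ Icc ε (5 * ε) := by
  have : s ∈ Metric.ball (3 * ε) (shiftedBump ε hε).rOut := by
    rw [← (shiftedBump ε hε).support_normed_eq (μ := volume)]
    exact hs
  rw [Real.ball_eq_Ioo] at this
  change s ∈ Ioo (3 * ε - 2 * ε) (3 * ε + 2 * ε) at this
  exact ⟨by linarith [this.1], by linarith [this.2]⟩

lemma shiftedBump_normed_le {ε : ℝ} (hε : 0 < ε) (s : ℝ) :
    (shiftedBump ε hε).normed volume s ≤ 1 / (2 * ε) := by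
  have := (shiftedBump ε hε).normed_le_div_measure_closedBall_rIn volume s
  rwa [Real.volume_real_closedBall (shiftedBump ε hε).rIn_pos.le] at this

lemma ae_tendsto_hankelMollify {h : ℝ → ℝ} (hloc : LocallyIntegrableOn h (Ioi 0)) {ε : ℕ → ℝ}
    (hε : ∀ n, 0 < ε n) (hε0 : Tendsto ε atTop (𝓝 0)) :
    ∀ᵐ x, 0 < x → Tendsto (fun n => hankelMollify ((Ici (ε n)).indicator h)
      ((shiftedBump (ε n) (hε n)).normed volume) x) atTop (𝓝 (h x)) := by
  have hall : ∀ᵐ x, ∀ m : ℕ, Tendsto (fun n => ⨍ y in Metric.closedBall x (10 * ε n),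
      ‖(Ici (ε m)).indicator h y - (Ici (ε m)).indicator h x‖) atTop (𝓝 0) := by
    rw [ae_all_iff]
    intro m
    filter_upwards [IsUnifLocDoublingMeasure.ae_tendsto_average_norm_sub volume
      (locallyIntegrable_indicator_Ici hloc (hε m)) 1] with x hx
    refine hx (fun _ => x) (fun n => 10 * ε n) ?_ ?_
    · rw [tendsto_nhdsWithin_iff]
      refine ⟨by simpa using hε0.const_mul 10, Eventually.of_forall fun n => ?_⟩
      have := hε n
      exact mem_Ioi.2 (by positivity)
    · refine Eventually.of_forall fun n => Metric.mem_closedBall_self ?_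
      have := hε n
      positivity
  filter_upwards [hall] with x hx hx0
  obtain ⟨m, hm⟩ := (hε0.eventually (gt_mem_nhds hx0)).exists
  set H := (Ici (ε m)).indicator h with hH
  have hHx : H x = h x := indicator_of_mem (mem_Ici.2 hm.le) h
  have hHloc : LocallyIntegrable H := locallyIntegrable_indicator_Ici hloc (hε m)
  rw [tendsto_iff_norm_sub_tendsto_zero]
  refine squeeze_zero (fun n => norm_nonneg _) (fun n => ?_)
    (by simpa using (hx m).const_mul 10)
  have hn := hε n
  set φ := (shiftedBump (ε n) (hε n)).normed volume
  have hsupp : ∀ s, φ s ≠ 0 → s ∈ Icc (ε n) (5 * ε n) := fun s hs =>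
    mem_Icc_of_shiftedBump_ne_zero (hε n) hs
  have hφ : Continuous φ := (shiftedBump (ε n) (hε n)).continuous_normed
  have hφs : HasCompactSupport φ := (shiftedBump (ε n) (hε n)).hasCompactSupport_normed
  have hφint : ∫ s, φ s = 1 := (shiftedBump (ε n) (hε n)).integral_normed
  have e1 : hankelMollify ((Ici (ε n)).indicator h) φ x = hankelMollify H φ x := by
    refine hankelMollify_congr fun s t hs ht => ?_
    have hs' := (hsupp s hs).1
    have ht' := (hsupp t ht).1
    rw [hH, indicator_of_mem (mem_Ici.2 (by linarith)), indicator_of_mem (mem_Ici.2 (by linarith))]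
  have hsubloc : LocallyIntegrable (fun y => H y - H x) :=
    hHloc.sub (locallyIntegrable_const (H x))
  rw [e1, ← hHx, ← hankelMollify_sub_const hHloc hφ hφs hφint]
  have h1 := abs_hankelMollify_le hsubloc hφ hφs
    (fun s => (shiftedBump (ε n) (hε n)).nonneg_normed s) (shiftedBump_normed_le (hε n))
    (R := 5 * ε n) (fun s hs => ⟨hn.le.trans (hsupp s hs).1, (hsupp s hs).2⟩) hφint x
  refine h1.trans ?_
  have h2 : ∫ y in Icc x (x + 2 * (5 * ε n)), |H y - H x| ≤
      ∫ y in Metric.closedBall x (10 * ε n), |H y - H x| := by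
    refine setIntegral_mono_set
      (hsubloc.integrableOn_isCompact (isCompact_closedBall _ _)).abs
      (Eventually.of_forall fun y => abs_nonneg _) (LE.le.eventuallyLE ?_)
    rw [Real.closedBall_eq_Icc]
    exact Icc_subset_Icc (by linarith) (by linarith)
  rw [setAverage_eq, Real.volume_real_closedBall (by positivity), smul_eq_mul]
  refine (mul_le_mul_of_nonneg_left h2 (by positivity)).trans_eq ?_
  field_simp
  norm_num [hH]

lemma le_inv_mul_log_rpow {h g : ℝ → ℝ} (hloc : LocallyIntegrableOn h (Ioi 0)) {κ : ℝ}
    (hκ : IntegrableOn (fun t : ℝ => |h t| * (1 + |Real.log t|) ^ (-κ)) (Ioi 0))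
    (hga : AntitoneOn g (Ioi 0))
    (hgh : ∀ᵐ t ∂(volume.restrict (Ioi (0:ℝ))), h t = g t) :
    ∃ C : ℝ, 0 < C ∧ ∃ ϰ : ℝ, ∀ t : ℝ, 0 < t →
      g t ≤ C * t⁻¹ * (1 + |Real.log t|) ^ ϰ := by
  set I := ∫ y in Ioi (0 : ℝ), |h y| * (1 + |Real.log y|) ^ (-κ) with hI
  have hI0 : 0 ≤ I := integral_nonneg fun y => by positivity
  refine ⟨2 * 2 ^ |κ| * (I + 1), by positivity, |κ|, fun t ht => ?_⟩
  have hsub : Icc (t / 2) t ⊆ Ioi 0 := fun y hy => mem_Ioi.2 ((half_pos ht).trans_le hy.1)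
  have hlow : t / 2 * g t ≤ ∫ y in Icc (t / 2) t, |h y| := by
    have hφint := (hloc.integrableOn_compact_subset hsub isCompact_Icc).abs
    have : ∫ y in Icc (t / 2) t, g t ≤ ∫ y in Icc (t / 2) t, |h y| := by
      refine setIntegral_mono_on_ae (by simp) hφint measurableSet_Icc ?_
      rw [ae_restrict_iff' measurableSet_Ioi] at hgh
      filter_upwards [hgh] with y hy hyt
      rw [hy (hsub hyt)]
      exact (hga (hsub hyt) ht hyt.2).trans (le_abs_self _)
    rw [setIntegral_const, Real.volume_real_Icc_of_le (by linarith), smul_eq_mul] at this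
    linarith
  have hup : ∫ y in Icc (t / 2) t, |h y| ≤ (2 * (1 + |Real.log t|)) ^ |κ| * I := by
    refine setIntegral_Icc_abs_le hloc hκ (half_pos ht) (fun y hy => ?_) (by positivity)
    refine (Real.rpow_le_rpow_of_exponent_le (by linarith [abs_nonneg (Real.log y)])
      (le_abs_self κ)).trans (Real.rpow_le_rpow (by positivity) ?_ (abs_nonneg κ))
    have hy0 : 0 < y := hsub hy
    have h1 : Real.log y ≤ Real.log t := Real.log_le_log hy0 hy.2
    have h2 : Real.log (t / 2) ≤ Real.log y := Real.log_le_log (half_pos ht) hy.1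
    rw [Real.log_div ht.ne' two_ne_zero] at h2
    have h3 := Real.log_two_lt_d9
    have h4 : |Real.log y| ≤ 1 + |Real.log t| :=
      abs_le.2 ⟨by linarith [neg_abs_le (Real.log t)], by linarith [le_abs_self (Real.log t)]⟩
    linarith [abs_nonneg (Real.log t)]
  rw [Real.mul_rpow (by norm_num) (by positivity)] at hup
  have hfin : t * g t ≤ 2 * 2 ^ |κ| * (I + 1) * (1 + |Real.log t|) ^ |κ| := by
    have : 0 ≤ (2 : ℝ) ^ |κ| * (1 + |Real.log t|) ^ |κ| := by positivity
    linarith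
  rw [mul_right_comm, ← div_eq_mul_inv, le_div_iff₀ ht, mul_comm]
  exact hfin

/-- If a real kernel `h` with `∫₀^∞ |h(t)|(1+|ln t|)^{-κ} dt < ∞` has a positive Hankel
form, then `h` agrees a.e. on `(0,∞)` with a completely monotonic `C^∞` function `g`
satisfying `g(t) ≤ C t⁻¹ (1+|ln t|)^ϰ`. -/
theorem positive_hankel_completely_monotonic (h : ℝ → ℝ)
    (hloc : LocallyIntegrableOn h (Set.Ioi 0))
    (hκ : ∃ κ : ℝ, IntegrableOn
      (fun t : ℝ => |h t| * (1 + |Real.log t|) ^ (-κ)) (Set.Ioi 0))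
    (hpos : ∀ f : ℝ → ℂ, IsTestFun f → 0 ≤ hankelQF (fun t : ℝ => ((h t : ℝ) : ℂ)) f) :
    ∃ g : ℝ → ℝ, ContDiffOn ℝ (⊤ : ℕ∞) g (Set.Ioi 0) ∧
      (∀ᵐ t ∂(volume.restrict (Set.Ioi (0:ℝ))), h t = g t) ∧
      (∀ n : ℕ, ∀ t : ℝ, 0 < t →
        0 ≤ (-1 : ℝ) ^ n * iteratedDerivWithin n g (Set.Ioi 0) t) ∧
      ∃ C : ℝ, 0 < C ∧ ∃ ϰ : ℝ, ∀ t : ℝ, 0 < t →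
        g t ≤ C * t⁻¹ * (1 + |Real.log t|) ^ ϰ := by
  obtain ⟨κ, hκ⟩ := hκ
  set ε : ℕ → ℝ := fun n => 1 / ((n : ℝ) + 1)
  have hε : ∀ n, 0 < ε n := fun n => by positivity
  have hε0 : Tendsto ε atTop (𝓝 0) := tendsto_one_div_add_atTop_nhds_zero_nat
  set φ : ℕ → ℝ → ℝ := fun n => (shiftedBump (ε n) (hε n)).normed volume
  set U : ℕ → ℝ → ℝ := fun n => hankelMollify ((Ici (ε n)).indicator h) (φ n)
  have hsupp : ∀ n s, φ n s ≠ 0 → s ∈ Icc (ε n) (5 * ε n) := fun n s hs =>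
    mem_Icc_of_shiftedBump_ne_zero (hε n) hs
  have hU : ∀ n, HankelPSD (U n) := fun n =>
    hankelPSD_hankelMollify hloc hpos (shiftedBump (ε n) (hε n)).contDiff_normed
      (shiftedBump (ε n) (hε n)).hasCompactSupport_normed (hε n) fun s hs => (hsupp n s hs).1
  have hUa : ∀ n, AntitoneOn (U n) (Ioi 0) := fun n =>
    (hU n).antitoneOn <| sublinear_hankelMollify hloc hκ
      (shiftedBump (ε n) (hε n)).continuous_normed
      (shiftedBump (ε n) (hε n)).hasCompactSupport_normed
      (shiftedBump (ε n) (hε n)).nonneg_normed (shiftedBump_normed_le (hε n))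
      (fun s hs => ⟨(hε n).le.trans (hsupp n s hs).1, (hsupp n s hs).2⟩)
      (shiftedBump (ε n) (hε n)).integral_normed (hε n)
  have hlim : ∀ᵐ x, 0 < x → Tendsto (fun n => U n x) atTop (𝓝 (h x)) :=
    ae_tendsto_hankelMollify hloc hε hε0
  have hF : (hyperfilter ℕ : Filter ℕ) ≤ atTop := Nat.hyperfilter_le_atTop
  obtain ⟨g, hg, hga, hgU⟩ := HankelPSD.exists_ultrafilter_limit (hyperfilter ℕ) hU hUa (by
    intro x hx
    have hfreq : ∃ᵐ y, y ∈ Ioo 0 x := by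
      rw [frequently_ae_mem_iff, Real.volume_Ioo]
      simpa using hx
    obtain ⟨y, hy, hylim⟩ := (hfreq.and_eventually hlim).exists
    refine ⟨h y + 1, ?_⟩
    filter_upwards [((hylim hy.1).mono_left hF).eventually (gt_mem_nhds (lt_add_one _))] with n hn
    exact (hUa n hy.1 hx hy.2.le).trans hn.le)
  have hgh : ∀ᵐ t ∂(volume.restrict (Ioi (0:ℝ))), h t = g t := by
    rw [ae_restrict_iff' measurableSet_Ioi]
    filter_upwards [hlim] with x hx hx0
    exact tendsto_nhds_unique ((hx hx0).mono_left hF) (hgU x hx0)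
  obtain ⟨hsmooth, hmono⟩ := hg.completelyMonotone hga
  exact ⟨g, hsmooth, hgh, hmono,
    le_inv_mul_log_rpow hloc hκ hga hgh⟩
end
end
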